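/- arXiv:2512.22841 — 3 statements merged into one kernel-verified Lean document; each statement's English description precedes it below -/
import Mathlib

section
/- There exist a constant c ∈ ℕ and a computable sequence (Σ_n)_{n∈ℕ} of finite subsets of the free group FreeGroup (Fin 2) on two generators, with |Σ_n| = c for every n, such that: (1) for every n, the abelianization of PresentedGroup Σ_n is a torsion group (i.e., the group ⟨x,y | Σ_n⟩ has zero first Betti number); (2) for every n, PresentedGroup Σ_n is either trivial or infinite; (3) the set { n ∈ ℕ : PresentedGroup Σ_n is trivial (a subsingleton) } is recursively enumerable but not recursive. (Theorem 3.4 of the paper, due to Miller.) -/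
/-- The set of elements of a free group represented by a given list of words. -/
def wordsSet {Z : Type*} (L : List (List (Z × Bool))) : Set (FreeGroup Z) :=
  { w | ∃ l ∈ L, w = FreeGroup.mk l }

/-!
A machine with finitely many stacks, whose stacks are read as numbers in a fixed base, acts on
vectors of integers by a finite system of injective partial affine maps `m + M * u ↦ n + N * u` with
coordinatewise products. In a group where commuting elements `x i` and an element `t` represent the
vector `v` by the conjugate `x ^ v * t * x ^ (-v)`, finitely many relations express that a letter
`r j` conjugates the arguments of the `j`-th map to its values, and that a letter `k` commutes with
every `r j` and with the conjugate for the halting configuration. Then `k` commutes with the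
conjugate for every `v` that leads to the halting configuration, and with no other: this is seen in
a permutational wreath product. So the halting problem reduces to the question whether words `W n`
are trivial in a fixed finitely presented group `Γ`.

Miller's construction turns `Γ` and `W n` into relators on two generators. The group they present
always has trivial abelianization and collapses if `W n = 1` in `Γ`. If `W n ≠ 1`, it maps onto
an infinite subgroup of an amalgam of two groups along free subgroups, on one side of which `Γ`
embeds; these free subgroups are visible in explicit permutation groups.
-/

universe u v

section FreeConjugates

variable {I : Type u} {Γ : Type v} [Group Γ]

theorem zpow_smul_eq_of_smul_eq {P X W : Type*} [Group P] [MulAction P X] {E : W × ℤ → X} {a : P}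
    (ha : ∀ w n, a • E (w, n) = E (w, n + 1)) (k : ℤ) (w : W) (n : ℤ) :
    a ^ k • E (w, n) = E (w, n + k) := by
  induction k generalizing n with
  | zero => simp
  | succ k ih => rw [zpow_add_one, mul_smul, ha, ih, add_right_comm, add_assoc]
  | pred k ih =>
    have ha' : a⁻¹ • E (w, n) = E (w, n - 1) := by rw [inv_smul_eq_iff, ha, sub_add_cancel]
    rw [zpow_sub_one, mul_smul, ha', ih, sub_add_eq_add_sub, add_sub_assoc]

theorem zpow_injective_of_smul_eq {P X W : Type*} [Nonempty W] [Group P] [MulAction P X]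
    {E : W × ℤ → X} (hE : Function.Injective E) {a : P}
    (ha : ∀ w n, a • E (w, n) = E (w, n + 1)) : Function.Injective fun n : ℤ => a ^ n := by
  intro m n hmn
  obtain ⟨w⟩ := ‹Nonempty W›
  have h := congrArg (· • E (w, 0)) hmn
  simp only [zpow_smul_eq_of_smul_eq ha, zero_add] at h
  exact congrArg Prod.snd (hE h)

theorem lift_injective_of_smul_eq {P X : Type*} [Group P] [MulAction P X]
    {E : FreeGroup I × ℤ → X} (hE : Function.Injective E) {a : P} {h : I → P} {l r : I → ℤ}
    (ha : ∀ w n, a • E (w, n) = E (w, n + 1))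
    (hh : ∀ i w, h i • E (w, r i) = E (FreeGroup.of i * w, l i)) :
    Function.Injective (FreeGroup.lift fun i => a ^ (-l i) * h i * a ^ r i) := by
  have lift_smul (u w : FreeGroup I) :
      FreeGroup.lift (fun i => a ^ (-l i) * h i * a ^ r i) u • E (w, 0) = E (u * w, 0) := by
    induction u using FreeGroup.induction_on generalizing w with
    | C1 => simp
    | of i =>
      rw [FreeGroup.lift_apply_of, mul_smul, mul_smul, zpow_smul_eq_of_smul_eq ha, zero_add, hh,
        zpow_smul_eq_of_smul_eq ha, add_neg_cancel]
    | inv_of i ih => rw [map_inv, inv_smul_eq_iff, ih, mul_inv_cancel_left]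
    | mul x y hx hy => rw [map_mul, mul_smul, hy, hx, mul_assoc]
  intro u v huv
  have h1 := lift_smul u 1
  rw [huv, lift_smul v 1, mul_one, mul_one] at h1
  exact congrArg Prod.fst (hE h1.symm)

/-- The homomorphism by which `Γ` acts on layer `n` of the model below: the layers `l i = r i` let
`Γ` act on the free factor through `χ`, every other layer carries the regular action. -/
noncomputable def layerHom (χ : Γ →* Multiplicative ℤ) (l r : I → ℤ) :
    ℤ → Γ →* FreeGroup I × Γ :=
  Function.extend (fun i : {i // l i = r i} => l i)
    (fun i => (MonoidHom.inl _ _).comp ((zpowersHom _ (FreeGroup.of i.1)).comp χ))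
    fun _ => MonoidHom.inr _ _

theorem layerHom_eq_of_eq (χ : Γ →* Multiplicative ℤ) {l r : I → ℤ}
    (hl : Function.Injective l) {i : I} (hi : l i = r i) {g : Γ}
    (hg : χ g = Multiplicative.ofAdd 1) :
    layerHom χ l r (r i) g = (FreeGroup.of i, 1) := by
  have hl' : Function.Injective fun i : {i // l i = r i} => l i := hl.comp Subtype.val_injective
  rw [← hi, layerHom, hl'.extend_apply _ _ ⟨i, hi⟩]
  simp [hg]

theorem layerHom_eq_of_ne (χ : Γ →* Multiplicative ℤ) {l r : I → ℤ} {n : ℤ}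
    (hn : ∀ i, l i = r i → l i ≠ n) (g : Γ) : layerHom χ l r n g = (1, g) := by
  rw [layerHom, Function.extend_apply' _ _ _ fun ⟨i, hi⟩ => hn i.1 i.2 hi]
  rfl

/-- The action of `Γ` on the layered set `ℤ × (FreeGroup I × Γ)`, layer `n` being acted on through
`θ n`. -/
def layerPerm (θ : ℤ → Γ →* FreeGroup I × Γ) :
    Γ →* Equiv.Perm (ℤ × (FreeGroup I × Γ)) where
  toFun g := Equiv.prodShear (Equiv.refl ℤ) fun n => Equiv.mulLeft (θ n g)
  map_one' := by ext x <;> simp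
  map_mul' g h := by ext x <;> simp

/-- The copy of `FreeGroup I × ℤ` inside the layered set on which the stable letter acts as a shift:
layer `l i` is the `g i`-translate of layer `r i`, the other layers are the obvious ones. -/
noncomputable def orbitMap (θ : ℤ → Γ →* FreeGroup I × Γ) (l r : I → ℤ) (g : I → Γ)
    (x : FreeGroup I × ℤ) : ℤ × (FreeGroup I × Γ) :=
  Function.extend l (fun i w => layerPerm θ (g i) (r i, (FreeGroup.of i)⁻¹ * w, 1))
    (fun n w => (n, w, 1)) x.2 x.1

variable {θ : ℤ → Γ →* FreeGroup I × Γ} {l r : I → ℤ} {g : I → Γ}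

theorem orbitMap_apply_left (hl : Function.Injective l) (w : FreeGroup I) (i : I) :
    orbitMap θ l r g (w, l i) = layerPerm θ (g i) (r i, (FreeGroup.of i)⁻¹ * w, 1) := by
  rw [orbitMap, hl.extend_apply]

theorem orbitMap_apply_of_ne {n : ℤ} (hn : ∀ i, l i ≠ n) (w : FreeGroup I) :
    orbitMap θ l r g (w, n) = (n, w, 1) := by
  rw [orbitMap, Function.extend_apply' _ _ _ fun ⟨i, hi⟩ => hn i hi]

variable {χ : Γ →* Multiplicative ℤ}

theorem orbitMap_apply_left_of_eq (hl : Function.Injective l) {i : I} (hi : l i = r i)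
    (hg : χ (g i) = Multiplicative.ofAdd 1) (w : FreeGroup I) :
    orbitMap (layerHom χ l r) l r g (w, l i) = (l i, w, 1) := by
  rw [orbitMap_apply_left hl, hi]
  simp [layerPerm, layerHom_eq_of_eq χ hl hi hg]

theorem orbitMap_apply_left_of_ne (hl : Function.Injective l) (hlr : ∀ i k, l i = r k → i = k)
    {i : I} (hi : l i ≠ r i) (w : FreeGroup I) :
    orbitMap (layerHom χ l r) l r g (w, l i) = (r i, (FreeGroup.of i)⁻¹ * w, g i) := by
  have hn (k : I) (_ : l k = r k) : l k ≠ r i := fun h => hi (hlr k i h ▸ h)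
  rw [orbitMap_apply_left hl]
  simp [layerPerm, layerHom_eq_of_ne χ hn]

theorem orbitMap_injective (hl : Function.Injective l) (hr : Function.Injective r)
    (hlr : ∀ i k, l i = r k → i = k)
    (hfix : ∀ i, l i = r i → χ (g i) = Multiplicative.ofAdd 1)
    (hmove : ∀ i, l i ≠ r i → g i ≠ 1) :
    Function.Injective (orbitMap (layerHom χ l r) l r g) := by
  -- Away from the moved indices the map is the obvious one; the moved layers are told apart from
  -- it by their last coordinate `g i ≠ 1`.
  have cases (n : ℤ) :
      (∀ w, orbitMap (layerHom χ l r) l r g (w, n) = (n, w, 1)) ∨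
        ∃ i, l i = n ∧ g i ≠ 1 ∧
          ∀ w, orbitMap (layerHom χ l r) l r g (w, n) = (r i, (FreeGroup.of i)⁻¹ * w, g i) := by
    by_cases hn : ∃ i, l i = n
    · obtain ⟨i, rfl⟩ := hn
      by_cases hi : l i = r i
      · exact .inl (orbitMap_apply_left_of_eq hl hi (hfix i hi))
      · exact .inr ⟨i, rfl, hmove i hi, orbitMap_apply_left_of_ne hl hlr hi⟩
    · push Not at hn
      exact .inl (orbitMap_apply_of_ne hn)
  rintro ⟨w, n⟩ ⟨w', n'⟩ h
  rcases cases n with hn | ⟨i, rfl, hi, hn⟩ <;> rcases cases n' with hn' | ⟨i', rfl, hi', hn'⟩ <;>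
    rw [hn, hn'] at h <;> simp only [Prod.mk.injEq] at h
  · exact Prod.ext h.2.1 h.1
  · exact absurd h.2.2.symm hi'
  · exact absurd h.2.2 hi
  · obtain rfl := hr h.1
    exact Prod.ext (mul_left_cancel h.2.1) rfl

theorem layerPerm_orbitMap_right (hl : Function.Injective l) (hlr : ∀ i k, l i = r k → i = k)
    (hfix : ∀ i, l i = r i → χ (g i) = Multiplicative.ofAdd 1) (i : I) (w : FreeGroup I) :
    layerPerm (layerHom χ l r) (g i) (orbitMap (layerHom χ l r) l r g (w, r i)) =
      orbitMap (layerHom χ l r) l r g (FreeGroup.of i * w, l i) := by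
  have hright : orbitMap (layerHom χ l r) l r g (w, r i) = (r i, w, 1) := by
    by_cases hi : l i = r i
    · rw [← hi, orbitMap_apply_left_of_eq hl hi (hfix i hi)]
    · exact orbitMap_apply_of_ne (fun k hk => hi (hlr k i hk ▸ hk)) w
  rw [hright, orbitMap_apply_left hl, inv_mul_cancel_left]

theorem exists_free_conjugates (χ : Γ →* Multiplicative ℤ) {l r : I → ℤ} {g : I → Γ}
    (hl : Function.Injective l) (hr : Function.Injective r) (hlr : ∀ i k, l i = r k → i = k)
    (hfix : ∀ i, l i = r i → χ (g i) = Multiplicative.ofAdd 1)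
    (hmove : ∀ i, l i ≠ r i → g i ≠ 1) :
    ∃ (P : Type (max u v)) (_ : Group P) (ι : Γ →* P) (a : P),
      Function.Injective (FreeGroup.lift fun i => a ^ (-l i) * ι (g i) * a ^ r i) ∧
        Function.Injective fun n : ℤ => a ^ n := by
  classical
  have hE := orbitMap_injective (χ := χ) hl hr hlr hfix hmove
  let shift : Equiv.Perm (FreeGroup I × ℤ) := (Equiv.refl _).prodCongr (Equiv.addRight 1)
  let a := shift.extendDomain (Equiv.ofInjective _ hE)
  have ha (w : FreeGroup I) (n : ℤ) : a • orbitMap (layerHom χ l r) l r g (w, n) =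
      orbitMap (layerHom χ l r) l r g (w, n + 1) :=
    Equiv.Perm.extendDomain_apply_image shift (Equiv.ofInjective _ hE) (w, n)
  exact ⟨_, inferInstance, layerPerm (layerHom χ l r), a,
    lift_injective_of_smul_eq hE ha fun i w => layerPerm_orbitMap_right hl hlr hfix i w,
    zpow_injective_of_smul_eq hE ha⟩

end FreeConjugates

section Amalgam

theorem exists_amalgam {H P Q : Type u} [Group H] [Group P] [Group Q] {φ : H →* P} {ψ : H →* Q}
    (hφ : Function.Injective φ) (hψ : Function.Injective ψ) :
    ∃ (L : Type u) (_ : Group L) (i : P →* L) (j : Q →* L),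
      Function.Injective i ∧ ∀ h, i (φ h) = j (ψ h) := by
  let G (t : Bool) : Type u := cond t P Q
  let _ (t : Bool) : Group (G t) := Bool.rec ‹Group Q› ‹Group P› t
  let f (t : Bool) : H →* G t := Bool.rec ψ φ t
  have hf (t : Bool) : Function.Injective (f t) := Bool.rec hψ hφ t
  refine ⟨Monoid.PushoutI f, inferInstance, Monoid.PushoutI.of (φ := f) true,
    Monoid.PushoutI.of (φ := f) false, Monoid.PushoutI.of_injective hf true, fun h => ?_⟩
  exact (Monoid.PushoutI.of_apply_eq_base f true h).trans
    (Monoid.PushoutI.of_apply_eq_base f false h).symm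

end Amalgam

section MillerEmbedding

variable {X Γ : Type} [Encodable X] [Group Γ]

/-- The free generators of the subgroup over which Miller's amalgam is formed. -/
inductive MillerIndex (X : Type)
  | base
  | hnn
  | word (k : Fin 3)
  | letter (x : X)

namespace MillerIndex

/-- The exponent of `a⁻¹` in the free generator on the side of the given group. -/
def groupLeft : MillerIndex X → ℤ
  | base => 0
  | hnn => 1
  | word k => k + 2
  | letter x => 10 + Encodable.encode x

/-- The exponent of `a` in the free generator on the side of the given group. -/
def groupRight : MillerIndex X → ℤ
  | base => 0
  | hnn => 1
  | word k => 2 * k + 5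
  | letter x => 10 + Encodable.encode x

/-- The exponent of `c⁻¹` in the free generator on the cyclic side. -/
def cyclicLeft : MillerIndex X → ℤ
  | base => 0
  | hnn => 1
  | word k => k + 3
  | letter x => 10 + Encodable.encode x

/-- The exponent of `c` in the free generator on the cyclic side. -/
def cyclicRight : MillerIndex X → ℤ
  | base => 0
  | hnn => 2
  | word k => k + 3
  | letter x => 10 + Encodable.encode x

/-- The element of `Γ × ℤ` conjugated in the free generator on the side of the given group; the
generator of `ℤ` is the common letter `b`. -/
def groupElement (x : X → Γ) (W : Γ) : MillerIndex X → Γ × Multiplicative ℤ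
  | base => (1, Multiplicative.ofAdd 1)
  | hnn => (1, Multiplicative.ofAdd 1)
  | word _ => (W, 1)
  | letter i => (x i, Multiplicative.ofAdd 1)

theorem groupLeft_injective : Function.Injective (groupLeft (X := X)) := by
  rintro (_ | _ | k | x) (_ | _ | k' | x') h <;>
    grind [groupLeft, Encodable.encode_inj]

theorem groupRight_injective : Function.Injective (groupRight (X := X)) := by
  rintro (_ | _ | k | x) (_ | _ | k' | x') h <;>
    grind [groupRight, Encodable.encode_inj]

theorem cyclicLeft_injective : Function.Injective (cyclicLeft (X := X)) := by
  rintro (_ | _ | k | x) (_ | _ | k' | x') h <;>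
    grind [cyclicLeft, Encodable.encode_inj]

theorem cyclicRight_injective : Function.Injective (cyclicRight (X := X)) := by
  rintro (_ | _ | k | x) (_ | _ | k' | x') h <;>
    grind [cyclicRight, Encodable.encode_inj]

theorem eq_of_groupLeft_eq_groupRight (i j : MillerIndex X) (h : groupLeft i = groupRight j) :
    i = j := by
  rcases i with _ | _ | k | x <;> rcases j with _ | _ | k' | x' <;>
    grind [groupLeft, groupRight, Encodable.encode_inj]

theorem eq_of_cyclicLeft_eq_cyclicRight (i j : MillerIndex X) (h : cyclicLeft i = cyclicRight j) :
    i = j := by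
  rcases i with _ | _ | k | x <;> rcases j with _ | _ | k' | x' <;>
    grind [cyclicLeft, cyclicRight, Encodable.encode_inj]

theorem snd_groupElement_of_eq (x : X → Γ) (W : Γ) (i : MillerIndex X)
    (h : groupLeft i = groupRight i) : (groupElement x W i).2 = Multiplicative.ofAdd 1 := by
  rcases i with _ | _ | k | x <;> grind [groupLeft, groupRight, groupElement]

theorem groupElement_ne_one_of_ne (x : X → Γ) {W : Γ} (hW : W ≠ 1) (i : MillerIndex X)
    (h : groupLeft i ≠ groupRight i) : groupElement x W i ≠ 1 := by
  rcases i with _ | _ | k | x <;> simp_all [groupLeft, groupRight, groupElement]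

end MillerIndex

/-- The word by which Miller's embedding expresses the letter of number `s` of the given group
through `a`, `b` and `c`. -/
def millerLetter {G : Type*} [Group G] (a b c : G) (s : ℕ) : G :=
  a ^ s * (c ^ s)⁻¹ * b * c ^ s * (a ^ s)⁻¹ * b⁻¹

/-- The word whose vanishing says that `a ^ (-(k + 2)) * w * a ^ (2 * k + 5)` is the conjugate of
`b` by `c ^ (k + 3)`. -/
def millerWord {G : Type*} [Group G] (a b c w : G) (k : ℕ) : G :=
  (a ^ (k + 2))⁻¹ * w * a ^ (2 * k + 5) * ((c ^ (k + 3))⁻¹ * b * c ^ (k + 3))⁻¹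

theorem eq_millerLetter {G : Type*} [Group G] {a b c y : G} {s : ℕ}
    (h : (a ^ s)⁻¹ * (y * b) * a ^ s = (c ^ s)⁻¹ * b * c ^ s) : y = millerLetter a b c s := by
  rw [mul_assoc, inv_mul_eq_iff_eq_mul, ← eq_mul_inv_iff_mul_eq, ← eq_mul_inv_iff_mul_eq] at h
  simpa only [millerLetter, mul_assoc] using h

open MillerIndex in
theorem exists_miller_embedding (x : X → Γ) {W : Γ} (hW : W ≠ 1) :
    ∃ (L : Type) (_ : Group L) (ι : Γ →* L) (a b c : L),
      a⁻¹ * b * a = c⁻¹ * b * c ^ 2 ∧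
      (∀ i, ι (x i) = millerLetter a b c (10 + Encodable.encode i)) ∧
      (∀ k : Fin 3, millerWord a b c (ι W) k = 1) ∧
      Function.Injective fun n : ℤ => a ^ n := by
  obtain ⟨P, _, ιP, a, hP, ha⟩ := exists_free_conjugates (MonoidHom.snd Γ (Multiplicative ℤ))
    (g := groupElement x W) groupLeft_injective groupRight_injective eq_of_groupLeft_eq_groupRight
    (snd_groupElement_of_eq x W) (groupElement_ne_one_of_ne x hW)
  obtain ⟨Q, _, ιQ, c, hQ, -⟩ := exists_free_conjugates (MonoidHom.id (Multiplicative ℤ))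
    (g := fun _ : MillerIndex X => Multiplicative.ofAdd 1)
    cyclicLeft_injective cyclicRight_injective eq_of_cyclicLeft_eq_cyclicRight
    (fun _ _ => rfl) fun _ _ => by decide
  obtain ⟨L, _, p, q, hp, hpq⟩ := exists_amalgam hP hQ
  have key (i : MillerIndex X) := hpq (FreeGroup.of i)
  simp only [FreeGroup.lift_apply_of, map_mul, map_zpow] at key
  have hb : p (ιP (1, Multiplicative.ofAdd 1)) = q (ιQ (Multiplicative.ofAdd 1)) := by
    simpa [groupLeft, groupRight, cyclicLeft, cyclicRight, groupElement] using key .base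
  refine ⟨L, inferInstance, p.comp (ιP.comp (MonoidHom.inl _ _)), p a,
    q (ιQ (Multiplicative.ofAdd 1)), q c, ?_, fun i => ?_, fun k => ?_, ?_⟩
  · simpa [groupLeft, groupRight, cyclicLeft, cyclicRight, groupElement, hb, zpow_neg] using
      key .hnn
  · have hxb : p (ιP (x i, Multiplicative.ofAdd 1)) =
        p (ιP (x i, 1)) * q (ιQ (Multiplicative.ofAdd 1)) := by
      rw [← hb, ← map_mul, ← map_mul, Prod.mk_mul_mk, mul_one, one_mul]
    refine eq_millerLetter ?_
    have h := key (.letter i)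
    simp only [groupLeft, groupRight, cyclicLeft, cyclicRight, groupElement, hxb, zpow_neg] at h
    exact_mod_cast h
  · have h := key (.word k)
    simp only [groupLeft, groupRight, cyclicLeft, cyclicRight, groupElement, zpow_neg] at h
    exact mul_inv_eq_one.2 (by exact_mod_cast h)
  · simpa only [Function.comp_def, map_zpow] using hp.comp ha

end MillerEmbedding

section MillerPresentation

variable {G : Type*} [Group G]

/-- The letter `c` of Miller's embedding in terms of its two generators. -/
def millerC (b e : G) : G := b⁻¹ * e * b * e⁻¹

/-- The letter `a` of Miller's embedding in terms of its two generators. -/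
def millerA (b e : G) : G := e⁻¹ * millerC b e

theorem millerC_eq_of_conj_eq {a b c : G} (h : a⁻¹ * b * a = c⁻¹ * b * c ^ 2) :
    millerC b (c * a⁻¹) = c :=
  calc
    b⁻¹ * (c * a⁻¹) * b * (c * a⁻¹)⁻¹ = b⁻¹ * c * (a⁻¹ * b * a) * c⁻¹ := by group
    _ = c := by rw [h]; group

theorem millerA_eq_of_conj_eq {a b c : G} (h : a⁻¹ * b * a = c⁻¹ * b * c ^ 2) :
    millerA b (c * a⁻¹) = a := by
  rw [millerA, millerC_eq_of_conj_eq h, mul_inv_rev, inv_inv, inv_mul_cancel_right]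

theorem eq_one_of_semiconjBy_pow {a c : G} {m : ℕ} (h₁ : SemiconjBy c (a ^ (m + 1)) (a ^ m))
    (h₂ : SemiconjBy c (a ^ (m + 2)) (a ^ (m + 1))) : a = 1 := by
  have hcomm : SemiconjBy c a a := by
    simpa only [pow_succ' a (m + 1), pow_succ' a m, mul_inv_cancel_right] using
      h₂.mul_right h₁.inv_right
  have hpow : c * a ^ (m + 1) = c * a ^ m := h₁.eq.trans (hcomm.pow_right m).eq.symm
  rwa [mul_left_cancel_iff, pow_succ, mul_eq_left] at hpow

theorem eq_one_of_millerWord_eq_one {b e : G}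
    (h : ∀ k : Fin 3, millerWord (millerA b e) b (millerC b e) 1 k = 1) : b = 1 ∧ e = 1 := by
  set a := millerA b e with ha
  set c := millerC b e with hc
  have hpow (k : ℕ) (hk : k < 3) : SemiconjBy (c ^ (k + 3)) (a ^ (k + 3)) b := by
    have hk := mul_inv_eq_one.1 (h ⟨k, hk⟩)
    rw [mul_one, mul_assoc, eq_inv_mul_iff_mul_eq, inv_mul_eq_of_eq_mul (c := a ^ (k + 3))] at hk
    · exact hk
    · rw [← pow_add]
      congr 1
      ring
  have hstep (k : ℕ) (hk : k < 2) : SemiconjBy c (a ^ (k + 4)) (a ^ (k + 3)) := by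
    have h := (SemiconjBy.inv_symm_left_iff.2 (hpow k (by omega))).mul_left
      (hpow (k + 1) (by omega))
    rwa [add_right_comm, pow_succ c (k + 3), inv_mul_cancel_left] at h
  have ha1 : a = 1 := eq_one_of_semiconjBy_pow (hstep 0 (by omega)) (hstep 1 (by omega))
  have hb : b = 1 := (hpow 0 (by omega)).eq_one_iff.1 (by rw [ha1, one_pow])
  refine ⟨hb, ?_⟩
  have hc1 : c = 1 := by simp [hc, millerC, hb]
  rwa [ha, millerA, ← hc, hc1, mul_one, inv_eq_one] at ha1

theorem map_millerC {H : Type*} [Group H] (φ : G →* H) (b e : G) :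
    φ (millerC b e) = millerC (φ b) (φ e) := by
  simp only [millerC, map_mul, map_inv]

theorem map_millerA {H : Type*} [Group H] (φ : G →* H) (b e : G) :
    φ (millerA b e) = millerA (φ b) (φ e) := by
  simp only [millerA, map_mul, map_inv, map_millerC]

theorem map_millerLetter {H : Type*} [Group H] (φ : G →* H) (a b c : G) (s : ℕ) :
    φ (millerLetter a b c s) = millerLetter (φ a) (φ b) (φ c) s := by
  simp only [millerLetter, map_mul, map_inv, map_pow]

theorem map_millerWord {H : Type*} [Group H] (φ : G →* H) (a b c w : G) (k : ℕ) :
    φ (millerWord a b c w k) = millerWord (φ a) (φ b) (φ c) (φ w) k := by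
  simp only [millerWord, map_mul, map_inv, map_pow]

theorem millerC_eq_one {A : Type*} [CommGroup A] (b e : A) : millerC b e = 1 := by
  simp [millerC]

theorem millerLetter_eq_one {A : Type*} [CommGroup A] (a b c : A) (s : ℕ) :
    millerLetter a b c s = 1 := by
  rw [millerLetter, mul_inv_eq_one]
  simp [mul_right_comm]

end MillerPresentation

namespace Miller

/-- The first generator `b` of Miller's two-generator group. -/
def b : FreeGroup (Fin 2) := FreeGroup.of 0

/-- The word `c` in the two generators `b`, `e` of Miller's group. -/
def c : FreeGroup (Fin 2) := millerC b (FreeGroup.of 1)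

/-- The word `a` in the two generators `b`, `e` of Miller's group. -/
def a : FreeGroup (Fin 2) := millerA b (FreeGroup.of 1)

variable {X : Type} [Encodable X]

/-- The translation of words in the given generators into words in the two generators of Miller's
group. -/
def encode : FreeGroup X →* FreeGroup (Fin 2) :=
  FreeGroup.lift fun i => millerLetter a b c (10 + Encodable.encode i)

/-- Miller's presentation on two generators, built from a presentation `R` and a word `W`: the
group it presents is trivial or infinite according to whether `W` is trivial in the group presented
by `R`. -/
def relators (R : Set (FreeGroup X)) (W : FreeGroup X) : Set (FreeGroup (Fin 2)) :=
  encode '' R ∪ Set.range fun k : Fin 3 => millerWord a b c (encode W) k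

theorem eq_one_of_encode_eq_one {G : Type*} [Group G] {φ : FreeGroup (Fin 2) →* G}
    {W : FreeGroup X} (hW : φ (encode W) = 1)
    (h : ∀ k : Fin 3, φ (millerWord a b c (encode W) k) = 1) : φ = 1 := by
  have hbe : φ b = 1 ∧ φ (FreeGroup.of 1) = 1 := by
    refine eq_one_of_millerWord_eq_one fun k => ?_
    have hk := h k
    rwa [map_millerWord, a, c, map_millerA, map_millerC, hW] at hk
  refine FreeGroup.ext_hom φ 1 fun i => ?_
  fin_cases i
  exacts [hbe.1, hbe.2]

variable {R : Set (FreeGroup X)} {W : FreeGroup X}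

theorem encode_mem_normalClosure_relators (hW : W ∈ Subgroup.normalClosure R) :
    encode W ∈ Subgroup.normalClosure (relators R W) := by
  have hR : Subgroup.normalClosure R ≤ (Subgroup.normalClosure (relators R W)).comap encode :=
    Subgroup.normalClosure_le_normal fun w hw =>
      Subgroup.subset_normalClosure (.inl (Set.mem_image_of_mem _ hw))
  exact hR hW

theorem mk_millerWord_eq_one (R : Set (FreeGroup X)) (W : FreeGroup X) (k : Fin 3) :
    PresentedGroup.mk (relators R W) (millerWord a b c (encode W) k) = 1 :=
  PresentedGroup.mk_eq_one_iff.2 (Subgroup.subset_normalClosure (.inr ⟨k, rfl⟩))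

theorem subsingleton_presentedGroup (hW : W ∈ Subgroup.normalClosure R) :
    Subsingleton (PresentedGroup (relators R W)) := by
  have h : PresentedGroup.mk (relators R W) = 1 := eq_one_of_encode_eq_one
    (PresentedGroup.mk_eq_one_iff.2 (encode_mem_normalClosure_relators hW))
    (mk_millerWord_eq_one R W)
  refine subsingleton_of_forall_eq 1 fun g => ?_
  obtain ⟨w, rfl⟩ := PresentedGroup.mk_surjective _ g
  rw [h, MonoidHom.one_apply]

theorem encode_eq_one {A : Type*} [CommGroup A] (φ : FreeGroup (Fin 2) →* A) (w : FreeGroup X) :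
    φ (encode w) = 1 := by
  have h : φ.comp (encode (X := X)) = 1 := FreeGroup.ext_hom _ _ fun i => by
    rw [MonoidHom.comp_apply, encode, FreeGroup.lift_apply_of, map_millerLetter,
      millerLetter_eq_one, MonoidHom.one_apply]
  exact DFunLike.congr_fun h w

theorem subsingleton_abelianization (R : Set (FreeGroup X)) (W : FreeGroup X) :
    Subsingleton (Abelianization (PresentedGroup (relators R W))) := by
  have h : Abelianization.of.comp (PresentedGroup.mk (relators R W)) = 1 :=
    eq_one_of_encode_eq_one (encode_eq_one _ W) fun k => by
      rw [MonoidHom.comp_apply, mk_millerWord_eq_one, map_one]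
  refine subsingleton_of_forall_eq 1 fun g => ?_
  obtain ⟨g, rfl⟩ := QuotientGroup.mk_surjective g
  obtain ⟨w, rfl⟩ := PresentedGroup.mk_surjective _ g
  exact DFunLike.congr_fun h w

theorem infinite_presentedGroup (hW : W ∉ Subgroup.normalClosure R) :
    Infinite (PresentedGroup (relators R W)) := by
  obtain ⟨L, _, ι, a', b', c', habc, hletter, hword, ha⟩ :=
    exists_miller_embedding (PresentedGroup.of (rels := R)) (mt PresentedGroup.mk_eq_one_iff.1 hW)
  let φ : FreeGroup (Fin 2) →* L := FreeGroup.lift ![b', c' * a'⁻¹]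
  have hb : φ b = b' := by simp [φ, b]
  have hc : φ c = c' := by simp [φ, c, b, map_millerC, millerC_eq_of_conj_eq habc]
  have ha' : φ a = a' := by simp [φ, a, b, map_millerA, millerA_eq_of_conj_eq habc]
  have hencode : φ.comp encode = ι.comp (PresentedGroup.mk R) := FreeGroup.ext_hom _ _ fun i => by
    rw [MonoidHom.comp_apply, encode, FreeGroup.lift_apply_of, map_millerLetter, ha', hb, hc,
      ← hletter]
    rfl
  have hrel : ∀ w ∈ relators R W, φ w = 1 := by
    rintro _ (⟨w, hw, rfl⟩ | ⟨k, rfl⟩)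
    · rw [← MonoidHom.comp_apply, hencode, MonoidHom.comp_apply,
        PresentedGroup.one_of_mem hw, map_one]
    · rw [map_millerWord, ha', hb, hc, ← MonoidHom.comp_apply, hencode]
      exact hword k
  let ψ : PresentedGroup (relators R W) →* L := PresentedGroup.toGroup hrel
  have hψ (n : ℤ) : ψ (PresentedGroup.mk _ (a ^ n)) = a' ^ n := by
    rw [← ha', ← map_zpow]
    rfl
  exact .of_injective (fun n : ℤ => PresentedGroup.mk (relators R W) (a ^ n)) <|
    .of_comp (f := ψ) (by simpa only [Function.comp_def, hψ] using ha)

/-- The homomorphism `b ↦ 1`, `e ↦ -1`. -/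
def degree : FreeGroup (Fin 2) →* Multiplicative ℤ :=
  FreeGroup.lift ![Multiplicative.ofAdd 1, Multiplicative.ofAdd (-1)]

theorem degree_millerWord (w : FreeGroup X) (k : ℕ) :
    degree (millerWord a b c (encode w) k) = Multiplicative.ofAdd (k + 2 : ℤ) := by
  have hb : degree b = Multiplicative.ofAdd 1 := by simp [degree, b]
  have hc : degree c = 1 := by rw [c, map_millerC, millerC_eq_one]
  have ha : degree a = Multiplicative.ofAdd 1 := by
    rw [a, map_millerA, millerA, millerC_eq_one]
    simp [degree]
  rw [map_millerWord, ha, hb, hc, encode_eq_one, millerWord]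
  simp only [← ofAdd_nsmul, ← ofAdd_neg, ← ofAdd_add, one_pow, inv_one, one_mul, mul_one]
  congr 1
  ring

theorem ncard_relators (hR : R.Finite) (W : FreeGroup X) :
    (relators R W).ncard = (encode '' R).ncard + 3 := by
  have hinj : Function.Injective fun k : Fin 3 => millerWord a b c (encode W) k := by
    intro k k' h
    have hdeg := congrArg degree h
    simp only [degree_millerWord, EmbeddingLike.apply_eq_iff_eq] at hdeg
    omega
  have hdisj : Disjoint (encode '' R)
      (Set.range fun k : Fin 3 => millerWord a b c (encode W) k) := by
    rw [Set.disjoint_left]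
    rintro _ ⟨w, -, rfl⟩ ⟨k, hk⟩
    have hdeg := congrArg degree hk
    rw [degree_millerWord, encode_eq_one, ofAdd_eq_one] at hdeg
    omega
  rw [relators, Set.ncard_union_eq hdisj (hR.image _) (Set.finite_range _), ← Set.image_univ,
    Set.ncard_image_of_injective _ hinj, Set.ncard_univ, Nat.card_eq_fintype_card, Fintype.card_fin]

end Miller

section ZPowProd

variable {ι G H : Type*} [Fintype ι] [Group G] [Group H]

/-- The product of the powers `x i ^ v i`, taken in a fixed order of the indices. -/
noncomputable def zpowProd (x : ι → G) (v : ι → ℤ) : G :=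
  ((Finset.univ : Finset ι).toList.map fun i => x i ^ v i).prod

/-- The conjugate of `t` by `zpowProd x v`, which stands for the vector `v`. -/
noncomputable def zpowConj (x : ι → G) (t : G) (v : ι → ℤ) : G :=
  zpowProd x v * t * (zpowProd x v)⁻¹

theorem map_zpowProd (φ : G →* H) (x : ι → G) (v : ι → ℤ) :
    φ (zpowProd x v) = zpowProd (φ ∘ x) v := by
  simp only [zpowProd, map_list_prod, List.map_map, Function.comp_def, map_zpow]

theorem map_zpowConj (φ : G →* H) (x : ι → G) (t : G) (v : ι → ℤ) :
    φ (zpowConj x t v) = zpowConj (φ ∘ x) (φ t) v := by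
  simp only [zpowConj, map_mul, map_inv, map_zpowProd]

theorem zpowProd_mul_right (x : ι → G) (m u : ι → ℤ) :
    zpowProd x (m * u) = zpowProd (fun i => x i ^ m i) u := by
  simp only [zpowProd, Pi.mul_apply, zpow_mul]

theorem zpowProd_ofAdd_single [DecidableEq ι] (v : ι → ℤ) :
    zpowProd (fun i => Multiplicative.ofAdd (Pi.single i (1 : ℤ))) v = Multiplicative.ofAdd v := by
  simp only [zpowProd, Finset.prod_map_toList, ← ofAdd_zsmul, ← ofAdd_sum]
  congr 1
  ext i
  simp [Finset.sum_apply, Pi.single_apply]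

theorem semiconjBy_list_prod_map {α : Type*} {g : G} {x y : α → G}
    (h : ∀ i, SemiconjBy g (x i) (y i)) (L : List α) :
    SemiconjBy g (L.map x).prod (L.map y).prod := by
  induction L with
  | nil => exact SemiconjBy.one_right g
  | cons i L ih => simpa only [List.map_cons, List.prod_cons] using (h i).mul_right ih

theorem semiconjBy_zpowProd {g : G} {x y : ι → G} (h : ∀ i, SemiconjBy g (x i) (y i)) (u : ι → ℤ) :
    SemiconjBy g (zpowProd x u) (zpowProd y u) :=
  semiconjBy_list_prod_map (fun i => (h i).zpow_right (u i)) _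

theorem zpowProd_add {x : ι → G} (hx : ∀ i i', Commute (x i) (x i')) (u v : ι → ℤ) :
    zpowProd x (u + v) = zpowProd x u * zpowProd x v := by
  have hmul (L : List ι) : (L.map fun i => x i ^ (u i + v i)).prod =
      (L.map fun i => x i ^ u i).prod * (L.map fun i => x i ^ v i).prod := by
    induction L with
    | nil => simp
    | cons i L ih =>
      have hcomm : Commute (x i ^ v i) (L.map fun i => x i ^ u i).prod :=
        semiconjBy_list_prod_map (fun i' => (hx i i').zpow_zpow _ _) L
      simp only [List.map_cons, List.prod_cons]
      rw [ih, zpow_add, hcomm.mul_mul_mul_comm]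
  exact hmul _

theorem zpowConj_add {x : ι → G} (hx : ∀ i i', Commute (x i) (x i')) (t : G) (u v : ι → ℤ) :
    zpowConj x t (u + v) = zpowProd x u * zpowConj x t v * (zpowProd x u)⁻¹ := by
  simp only [zpowConj, zpowProd_add hx, mul_inv_rev, mul_assoc]

end ZPowProd

/-- A finite system of partial affine maps `srcOffset j + srcScale j * u ↦
tgtOffset j + tgtScale j * u` of `ι → ℤ`, with coordinatewise products. -/
structure AffineSystem (ι J : Type*) where
  srcOffset : J → ι → ℤ
  tgtOffset : J → ι → ℤ
  srcScale : J → ι → ℤ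
  tgtScale : J → ι → ℤ
  srcScale_ne_zero : ∀ j i, srcScale j i ≠ 0
  tgtScale_ne_zero : ∀ j i, tgtScale j i ≠ 0

namespace AffineSystem

variable {ι J : Type*} (S : AffineSystem ι J)

/-- The argument of the `j`-th map with parameter `u`. -/
def src (j : J) (u : ι → ℤ) : ι → ℤ := S.srcOffset j + S.srcScale j * u

/-- The value of the `j`-th map with parameter `u`. -/
def tgt (j : J) (u : ι → ℤ) : ι → ℤ := S.tgtOffset j + S.tgtScale j * u

/-- One of the maps of the system takes `v` to `v'`. -/
def Step (v v' : ι → ℤ) : Prop := ∃ j u, v = S.src j u ∧ v' = S.tgt j u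

variable [Fintype ι] {G : Type*} [Group G]

/-- The relations by which a group simulates the reversible moves of an affine system: the `x i`
generate the vectors, `r j` implements the `j`-th map, and `k` recognises the vector `v₀`. -/
structure IsModel (v₀ : ι → ℤ) (x : ι → G) (t k : G) (r : J → G) : Prop where
  commute_x : ∀ i i', Commute (x i) (x i')
  semiconj_scale : ∀ j i, SemiconjBy (r j) (x i ^ S.srcScale j i) (x i ^ S.tgtScale j i)
  semiconj_offset : ∀ j, SemiconjBy (r j) (zpowConj x t (S.srcOffset j))
    (zpowConj x t (S.tgtOffset j))
  commute_k_r : ∀ j, Commute k (r j)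
  commute_k_target : Commute k (zpowConj x t v₀)

variable {S} {v₀ : ι → ℤ} {x : ι → G} {t k : G} {r : J → G}

theorem IsModel.semiconj_src_tgt (hM : S.IsModel v₀ x t k r) (j : J) (u : ι → ℤ) :
    SemiconjBy (r j) (zpowConj x t (S.src j u)) (zpowConj x t (S.tgt j u)) := by
  have hscale :
      SemiconjBy (r j) (zpowProd x (S.srcScale j * u)) (zpowProd x (S.tgtScale j * u)) := by
    rw [zpowProd_mul_right, zpowProd_mul_right]
    exact semiconjBy_zpowProd (hM.semiconj_scale j) u
  rw [src, tgt, add_comm, add_comm (S.tgtOffset j), zpowConj_add hM.commute_x,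
    zpowConj_add hM.commute_x]
  exact (hscale.mul_right (hM.semiconj_offset j)).mul_right hscale.inv_right

theorem IsModel.commute_of_reflTransGen (hM : S.IsModel v₀ x t k r) {v : ι → ℤ}
    (hv : Relation.ReflTransGen S.Step v v₀) : Commute k (zpowConj x t v) := by
  induction hv using Relation.ReflTransGen.head_induction_on with
  | refl => exact hM.commute_k_target
  | head hstep _ ih =>
    obtain ⟨j, u, rfl, rfl⟩ := hstep
    rw [eq_inv_mul_of_mul_eq (hM.semiconj_src_tgt j u).eq]
    exact (hM.commute_k_r j).inv_right.mul_right (ih.mul_right (hM.commute_k_r j))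

end AffineSystem

section CosetModel

theorem exists_equiv_prod_of_fiber {A B N : Type*} {f : A → B}
    (hf : ∀ b, Nonempty (N ≃ {a // f a = b})) (a₀ : A) (n₀ : N) :
    ∃ e : B × N ≃ A, (∀ b n, f (e (b, n)) = b) ∧ e (f a₀, n₀) = a₀ := by
  classical
  have hf₀ (b : B) : ∃ e : N ≃ {a // f a = b}, f a₀ = b → (e n₀ : A) = a₀ := by
    obtain ⟨e⟩ := hf b
    by_cases hb : f a₀ = b
    · exact ⟨e.trans (Equiv.swap (e n₀) ⟨a₀, hb⟩), fun _ => by simp⟩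
    · exact ⟨e, fun h => absurd h hb⟩
  choose e he using hf₀
  exact ⟨(Equiv.sigmaEquivProd B N).symm.trans
    ((Equiv.sigmaCongrRight e).trans (Equiv.sigmaFiberEquiv f)), fun b n => (e b n).2, he _ rfl⟩

variable {V : Type*} [AddCommGroup V]

theorem bijective_add_section {α : V →+ V} (hα : Function.Injective α) {σ : V ⧸ α.range → V}
    (hσ : ∀ q, (σ q : V ⧸ α.range) = q) :
    Function.Bijective fun x : V × V ⧸ α.range => α x.1 + σ x.2 := by
  have hmk (v : V) (q : V ⧸ α.range) : ((α v + σ q : V) : V ⧸ α.range) = q := by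
    rw [QuotientAddGroup.mk_add, hσ, (QuotientAddGroup.eq_zero_iff (α v)).2 (Set.mem_range_self v),
      zero_add]
  constructor
  · rintro ⟨v, q⟩ ⟨v', q'⟩ h
    obtain rfl : q = q' := by rw [← hmk v q, ← hmk v' q']; exact congrArg _ h
    obtain rfl : v = v' := hα (add_right_cancel h)
    rfl
  · intro v
    obtain ⟨w, hw⟩ : v - σ v ∈ α.range := by
      rw [← QuotientAddGroup.eq_zero_iff, QuotientAddGroup.mk_sub, hσ, sub_self]
    exact ⟨(w, v), by simp [hw]⟩

theorem nonempty_equiv_fiber_preimage {V Q : Type u} [Countable Q] [Nonempty Q]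
    {g : Q → V → V} (hg : ∀ q, Function.Injective (g q)) (R : Set V) :
    Nonempty (ℕ × Set V ≃ {x : Q × Set V × ℕ × Set V // g x.1 ⁻¹' x.2.1 = R}) := by
  refine Cardinal.eq.1 (le_antisymm ?_ ?_)
  · obtain ⟨q⟩ := ‹Nonempty Q›
    let lift (n : ℕ × Set V) : {x : Q × Set V × ℕ × Set V // g x.1 ⁻¹' x.2.1 = R} :=
      ⟨(q, g q '' R, n), Set.preimage_image_eq R (hg q)⟩
    have hlift : Function.Injective lift := fun n n' h => by simpa [lift] using h
    exact Cardinal.mk_le_of_injective hlift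
  · have hℕ : Cardinal.aleph0 ≤ Cardinal.mk (ℕ × Set V) := Cardinal.aleph0_le_mk _
    have hQ : Cardinal.mk Q ≤ Cardinal.mk (ℕ × Set V) := Cardinal.mk_le_aleph0.trans hℕ
    have hSet : Cardinal.mk (Set V) ≤ Cardinal.mk (ℕ × Set V) :=
      Cardinal.mk_le_of_injective (f := fun P => ((0 : ℕ), P)) fun P P' h => by simpa using h
    calc Cardinal.mk {x : Q × Set V × ℕ × Set V // g x.1 ⁻¹' x.2.1 = R}
        ≤ Cardinal.mk (Q × Set V × ℕ × Set V) := Cardinal.mk_subtype_le _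
      _ = Cardinal.mk Q * (Cardinal.mk (Set V) * Cardinal.mk (ℕ × Set V)) := by
        simp only [Cardinal.mk_prod, Cardinal.lift_id, Cardinal.lift_uzero]
      _ ≤ Cardinal.mk (ℕ × Set V) * (Cardinal.mk (ℕ × Set V) * Cardinal.mk (ℕ × Set V)) := by
        gcongr
      _ = Cardinal.mk (ℕ × Set V) := by rw [Cardinal.mul_eq_self hℕ, Cardinal.mul_eq_self hℕ]

variable (V) in
/-- Pairs `(v, P)` of a point and a subset of `V`, of which `v ∈ P` is the label, with infinitely
many copies of each pair. -/
abbrev LabeledPoint : Type _ := V × Set V × ℕ × Set V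

namespace LabeledPoint

/-- Translation of the point. -/
def translate : Multiplicative V →* Equiv.Perm (LabeledPoint V) where
  toFun v := (Equiv.addLeft v.toAdd).prodCongr (Equiv.refl _)
  map_one' := by ext1 ω; exact Prod.ext (zero_add _) rfl
  map_mul' v w := by ext1 ω; exact Prod.ext (add_assoc ..) rfl

/-- The label of `(v, P)`. -/
def label (ω : LabeledPoint V) : Prop := ω.1 ∈ ω.2.1

-- The orbits of `α.range` and those of `V` can be matched so that labels agree, because every
-- labelling of an orbit occurs equally often on both sides.
theorem exists_perm_semiconjBy [Countable V] {α : V →+ V} (hα : Function.Injective α)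
    (p : V) (H : Set V) :
    ∃ Φ : Equiv.Perm (LabeledPoint V),
      (∀ v, SemiconjBy Φ (translate (.ofAdd v)) (translate (.ofAdd (α v)))) ∧
      (∀ ω, (Φ ω).label ↔ ω.label) ∧
      Φ (0, (fun w => α w + p) ⁻¹' H, 0, ∅) = (p, H, 0, ∅) := by
  classical
  have : Countable (V ⧸ α.range) := Quotient.countable
  obtain ⟨σ, hσ, hσp⟩ : ∃ σ : V ⧸ α.range → V, (∀ q, (σ q : V ⧸ α.range) = q) ∧ σ p = p := by
    refine ⟨Function.update Quotient.out p p, fun q => ?_, Function.update_self ..⟩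
    rcases eq_or_ne q p with rfl | hq
    · rw [Function.update_self]
    · rw [Function.update_of_ne hq]; exact Quotient.out_eq q
  obtain ⟨e, he, hep⟩ := exists_equiv_prod_of_fiber
    (nonempty_equiv_fiber_preimage fun q v w h => hα (add_right_cancel (b := σ q) h))
    ((p : V ⧸ α.range), H, 0, ∅) (0, ∅)
  let Φ : Equiv.Perm (LabeledPoint V) := ((Equiv.refl V).prodCongr e).trans
    ((Equiv.prodAssoc ..).symm.trans
      ((Equiv.ofBijective _ (bijective_add_section hα hσ)).prodCongr (Equiv.refl _)))
  have hΦ (w : V) (n) : Φ (w, n) = (α w + σ (e n).1, (e n).2) := rfl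
  refine ⟨Φ, fun v => ?_, fun ⟨w, R, n⟩ => ?_, ?_⟩
  · ext1 ⟨w, n⟩
    exact Prod.ext ((congrArg (· + _) (map_add α v w)).trans (add_assoc ..)) rfl
  · nth_rw 2 [← he R n]
    rfl
  · simp only [hσp] at hep
    rw [hΦ, hep, hσp, map_zero, zero_add]

theorem exists_perm_semiconjBy₂ [Countable V] {α β : V →+ V} (hα : Function.Injective α)
    (hβ : Function.Injective β) {p q : V} {H : Set V} (hH : ∀ u, α u + p ∈ H ↔ β u + q ∈ H) :
    ∃ ρ : Equiv.Perm (LabeledPoint V),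
      (∀ v, SemiconjBy ρ (translate (.ofAdd (α v))) (translate (.ofAdd (β v)))) ∧
      (∀ ω, (ρ ω).label ↔ ω.label) ∧ ρ (p, H, 0, ∅) = (q, H, 0, ∅) := by
  obtain ⟨Φ, hΦ, hΦl, hΦp⟩ := exists_perm_semiconjBy hα p H
  obtain ⟨Ψ, hΨ, hΨl, hΨq⟩ := exists_perm_semiconjBy hβ q H
  refine ⟨Ψ * Φ⁻¹, fun v => (hΨ v).mul_left (hΦ v).inv_symm_left, fun ω => ?_, ?_⟩
  · rw [Equiv.Perm.mul_apply, hΨl, ← hΦl, Equiv.Perm.coe_inv, Equiv.apply_symm_apply]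
  · rw [← hΦp, Equiv.Perm.mul_apply, Equiv.Perm.coe_inv, Equiv.symm_apply_apply, ← hΨq]
    simp only [Set.preimage, hH]

end LabeledPoint

end CosetModel

section PermutationalWreath

variable {Ω K : Type*} [Group K]

theorem semiconjBy_inr_inl (ρ : Equiv.Perm Ω) (f : Ω → K) :
    SemiconjBy (SemidirectProduct.inr ρ : (Ω → K) ⋊[mulAutArrow] Equiv.Perm Ω)
      (SemidirectProduct.inl (f ∘ ρ)) (SemidirectProduct.inl f) := by
  rw [SemiconjBy, ← mul_inv_eq_iff_eq_mul, ← map_inv, ← SemidirectProduct.inl_aut]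
  congr 1
  ext1 ω
  exact congrArg f (ρ.apply_symm_apply ω)

variable [DecidableEq Ω]

theorem semiconjBy_inr_inl_mulSingle (ρ : Equiv.Perm Ω) (ω : Ω) (s : K) :
    SemiconjBy (SemidirectProduct.inr ρ : (Ω → K) ⋊[mulAutArrow] Equiv.Perm Ω)
      (SemidirectProduct.inl (Pi.mulSingle ω s))
      (SemidirectProduct.inl (Pi.mulSingle (ρ ω) s)) := by
  convert semiconjBy_inr_inl ρ (Pi.mulSingle (ρ ω) s) using 2
  ext1 ω'
  simp [Pi.mulSingle_apply]

theorem commute_inl_mulSingle_iff (f : Ω → K) (ω : Ω) (s : K) :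
    Commute (SemidirectProduct.inl f : (Ω → K) ⋊[mulAutArrow] Equiv.Perm Ω)
      (SemidirectProduct.inl (Pi.mulSingle ω s)) ↔ Commute (f ω) s := by
  rw [commute_iff_eq, ← map_mul, ← map_mul, SemidirectProduct.inl_inj]
  refine ⟨fun h => by simpa [commute_iff_eq] using congrFun h ω, fun h => funext fun ω' => ?_⟩
  rcases eq_or_ne ω' ω with rfl | hne
  · simpa using h.eq
  · simp [hne]

end PermutationalWreath

/-- The wreath product of the symmetric group on three letters by the permutations of the labeled
points of `V`. -/
abbrev LabeledWreath (V : Type*) : Type _ :=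
  (LabeledPoint V → Equiv.Perm (Fin 3)) ⋊[mulAutArrow] Equiv.Perm (LabeledPoint V)

namespace LabeledWreath

variable {V : Type*}

open Classical in
/-- A transposition placed at the point `v` labeled by `H`, which stands for the vector `v`. -/
noncomputable def point (H : Set V) (v : V) : LabeledWreath V :=
  SemidirectProduct.inl (Pi.mulSingle (v, H, 0, ∅) (Equiv.swap 0 1))

variable (V) in
open Classical in
/-- The function that is trivial at the points whose label holds and another transposition at the
remaining points. -/
noncomputable def labelDetector : LabeledWreath V :=
  SemidirectProduct.inl fun ω => if ω.label then 1 else Equiv.swap 1 2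

theorem semiconjBy_inr_point {ρ : Equiv.Perm (LabeledPoint V)} {H : Set V} {v w : V}
    (h : ρ (v, H, 0, ∅) = (w, H, 0, ∅)) :
    SemiconjBy (SemidirectProduct.inr ρ) (point H v) (point H w) := by
  classical
  simpa only [point, h] using
    semiconjBy_inr_inl_mulSingle ρ (v, H, 0, ∅) (Equiv.swap (0 : Fin 3) 1)

theorem commute_labelDetector_inr {ρ : Equiv.Perm (LabeledPoint V)}
    (h : ∀ ω, (ρ ω).label ↔ ω.label) :
    Commute (labelDetector V) (SemidirectProduct.inr ρ) := by
  classical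
  have hρ := semiconjBy_inr_inl ρ fun ω : LabeledPoint V =>
    if ω.label then 1 else Equiv.swap (1 : Fin 3) 2
  simp only [Function.comp_def, h] at hρ
  exact hρ.symm

theorem commute_labelDetector_point_iff {H : Set V} {v : V} :
    Commute (labelDetector V) (point H v) ↔ v ∈ H := by
  have hswap : ¬ Equiv.swap (1 : Fin 3) 2 * Equiv.swap 0 1 = Equiv.swap 0 1 * Equiv.swap 1 2 := by
    decide
  classical
  rw [labelDetector, point, commute_inl_mulSingle_iff]
  by_cases hv : v ∈ H <;> simp [LabeledPoint.label, hv, commute_iff_eq, hswap]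

end LabeledWreath

namespace AffineSystem

variable {ι : Type u} {J : Type*} (S : AffineSystem ι J)

theorem exists_perm_src_tgt [Finite ι] {H : Set (ι → ℤ)}
    (hH : ∀ j u, S.src j u ∈ H ↔ S.tgt j u ∈ H) (j : J) :
    ∃ ρ : Equiv.Perm (LabeledPoint (ι → ℤ)),
      (∀ v, SemiconjBy ρ (LabeledPoint.translate (.ofAdd (S.srcScale j * v)))
        (LabeledPoint.translate (.ofAdd (S.tgtScale j * v)))) ∧
      (∀ ω, (ρ ω).label ↔ ω.label) ∧ ρ (S.srcOffset j, H, 0, ∅) = (S.tgtOffset j, H, 0, ∅) := by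
  have hmul {m : ι → ℤ} (hm : ∀ i, m i ≠ 0) : Function.Injective (AddMonoidHom.mulLeft m) :=
    fun u v h => funext fun i => mul_left_cancel₀ (hm i) (congrFun h i)
  refine LabeledPoint.exists_perm_semiconjBy₂ (hmul (S.srcScale_ne_zero j))
    (hmul (S.tgtScale_ne_zero j)) fun u => ?_
  simpa only [src, tgt, add_comm, AddMonoidHom.coe_mulLeft] using hH j u

theorem exists_isModel [Fintype ι] {v₀ : ι → ℤ} {H : Set (ι → ℤ)} (hv₀ : v₀ ∈ H)
    (hH : ∀ j u, S.src j u ∈ H ↔ S.tgt j u ∈ H) :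
    ∃ (G : Type u) (_ : Group G) (x : ι → G) (t k : G) (r : J → G),
      S.IsModel v₀ x t k r ∧ ∀ v, Commute k (zpowConj x t v) → v ∈ H := by
  classical
  choose ρ hρ hρl hρp using S.exists_perm_src_tgt hH
  let X : Multiplicative (ι → ℤ) →* LabeledWreath (ι → ℤ) :=
    SemidirectProduct.inr.comp LabeledPoint.translate
  let x (i : ι) : LabeledWreath (ι → ℤ) := X (.ofAdd (Pi.single i 1))
  have hx (v : ι → ℤ) : zpowProd x v = X (.ofAdd v) := by
    rw [← zpowProd_ofAdd_single, map_zpowProd]; rfl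
  have hpow (i : ι) (m : ι → ℤ) : x i ^ m i = X (.ofAdd (m * Pi.single i 1)) := by
    rw [← map_zpow, ← ofAdd_zsmul]
    congr 2
    ext i'
    rcases eq_or_ne i' i with rfl | h <;> simp [*]
  have hpoint (v : ι → ℤ) : zpowConj x (LabeledWreath.point H 0) v = LabeledWreath.point H v := by
    rw [zpowConj, hx, mul_inv_eq_iff_eq_mul]
    exact LabeledWreath.semiconjBy_inr_point (Prod.ext (add_zero v) rfl)
  refine ⟨_, inferInstance, x, LabeledWreath.point H 0, LabeledWreath.labelDetector _,
    fun j => SemidirectProduct.inr (ρ j), ⟨?_, fun j i => ?_, fun j => ?_, ?_, ?_⟩, fun v hv => ?_⟩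
  · exact fun i i' => (Commute.all _ _).map X
  · rw [hpow, hpow]
    exact (hρ j (Pi.single i 1)).map SemidirectProduct.inr
  · rw [hpoint, hpoint]
    exact LabeledWreath.semiconjBy_inr_point (hρp j)
  · exact fun j => LabeledWreath.commute_labelDetector_inr (hρl j)
  · rwa [hpoint, LabeledWreath.commute_labelDetector_point_iff]
  · rwa [← LabeledWreath.commute_labelDetector_point_iff, ← hpoint]

end AffineSystem

section SemiconjRelator

/-- The word `a * x * a⁻¹ * y⁻¹`, which is trivial exactly when `a` conjugates `x` to `y`. -/
def semiconjRelator {G : Type*} [Group G] (a x y : G) : G := a * x * a⁻¹ * y⁻¹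

variable {G H : Type*} [Group G] [Group H]

theorem map_semiconjRelator (φ : G →* H) (a x y : G) :
    φ (semiconjRelator a x y) = semiconjRelator (φ a) (φ x) (φ y) := by
  simp only [semiconjRelator, map_mul, map_inv]

theorem semiconjRelator_eq_one_iff {a x y : G} : semiconjRelator a x y = 1 ↔ SemiconjBy a x y := by
  rw [semiconjRelator, mul_inv_eq_one, mul_inv_eq_iff_eq_mul, SemiconjBy]

end SemiconjRelator

/-- The generators of the group presented by an affine system, in the roles described at
`AffineSystem.IsModel`. -/
inductive AffineGenerator (ι J : Type*)
  | x (i : ι)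
  | r (j : J)
  | t
  | k

instance {ι J : Type*} [Countable ι] [Countable J] : Countable (AffineGenerator ι J) := by
  let f : ι ⊕ J ⊕ Bool → AffineGenerator ι J :=
    Sum.elim .x (Sum.elim .r fun b => bif b then .t else .k)
  refine Function.Surjective.countable (f := f) ?_
  rintro (i | j | _ | _)
  exacts [⟨.inl i, rfl⟩, ⟨.inr (.inl j), rfl⟩, ⟨.inr (.inr true), rfl⟩, ⟨.inr (.inr false), rfl⟩]

namespace AffineSystem

open FreeGroup

variable {ι : Type u} {J : Type v} [Fintype ι] (S : AffineSystem ι J)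

variable (J) in
/-- The word whose triviality expresses that `k` commutes with the conjugate of `t` standing for
`v`. -/
noncomputable def testWord (v : ι → ℤ) : FreeGroup (AffineGenerator ι J) :=
  semiconjRelator (of .k) (zpowConj (of ∘ .x) (of .t) v) (zpowConj (of ∘ .x) (of .t) v)

theorem map_testWord_eq_one_iff {G : Type*} [Group G] (φ : FreeGroup (AffineGenerator ι J) →* G)
    (v : ι → ℤ) :
    φ (testWord J v) = 1 ↔
      Commute (φ (of .k)) (zpowConj (fun i => φ (of (.x i))) (φ (of .t)) v) := by
  rw [testWord, map_semiconjRelator, semiconjRelator_eq_one_iff, map_zpowConj]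
  rfl

/-- The relators expressing that the generators form a model of `S` with target `v₀`. -/
def relators (v₀ : ι → ℤ) : Set (FreeGroup (AffineGenerator ι J)) :=
  (Set.range fun ii' : ι × ι => semiconjRelator (of (.x ii'.1)) (of (.x ii'.2)) (of (.x ii'.2))) ∪
  (Set.range fun ji : J × ι => semiconjRelator (of (.r ji.1))
    (of (.x ji.2) ^ S.srcScale ji.1 ji.2) (of (.x ji.2) ^ S.tgtScale ji.1 ji.2)) ∪
  (Set.range fun j => semiconjRelator (of (.r j))
    (zpowConj (of ∘ .x) (of .t) (S.srcOffset j)) (zpowConj (of ∘ .x) (of .t) (S.tgtOffset j))) ∪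
  (Set.range fun j => semiconjRelator (of .k) (of (.r j)) (of (.r j))) ∪
  {testWord J v₀}

theorem finite_relators [Finite J] (v₀ : ι → ℤ) : (S.relators v₀).Finite :=
  ((((Set.finite_range _).union (Set.finite_range _)).union (Set.finite_range _)).union
    (Set.finite_range _)).union (Set.finite_singleton _)

theorem forall_relators_eq_one_iff {G : Type*} [Group G]
    (φ : FreeGroup (AffineGenerator ι J) →* G) (v₀ : ι → ℤ) :
    (∀ w ∈ S.relators v₀, φ w = 1) ↔
      S.IsModel v₀ (fun i => φ (of (.x i))) (φ (of .t)) (φ (of .k)) fun j => φ (of (.r j)) := by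
  simp only [relators, Set.mem_union, or_imp, forall_and, Set.forall_mem_range,
    Set.mem_singleton_iff, forall_eq, map_testWord_eq_one_iff, map_semiconjRelator,
    semiconjRelator_eq_one_iff, map_zpowConj, map_zpow, Prod.forall]
  exact ⟨fun ⟨⟨⟨⟨h₁, h₂⟩, h₃⟩, h₄⟩, h₅⟩ => ⟨h₁, h₂, h₃, h₄, h₅⟩,
    fun ⟨h₁, h₂, h₃, h₄, h₅⟩ => ⟨⟨⟨⟨h₁, h₂⟩, h₃⟩, h₄⟩, h₅⟩⟩

theorem testWord_mem_normalClosure_iff {v₀ : ι → ℤ}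
    (h₀ : ∀ j u, Relation.ReflTransGen S.Step (S.src j u) v₀ →
      Relation.ReflTransGen S.Step (S.tgt j u) v₀) (v : ι → ℤ) :
    testWord J v ∈ Subgroup.normalClosure (S.relators v₀) ↔
      Relation.ReflTransGen S.Step v v₀ := by
  constructor
  · intro hv
    obtain ⟨G, _, x, t, k, r, hM, hH⟩ := S.exists_isModel
      (H := {v | Relation.ReflTransGen S.Step v v₀}) .refl fun j u =>
        ⟨h₀ j u, .head ⟨j, u, rfl, rfl⟩⟩
    let φ : FreeGroup (AffineGenerator ι J) →* G := lift fun
      | .x i => x i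
      | .r j => r j
      | .t => t
      | .k => k
    have hφ : Subgroup.normalClosure (S.relators v₀) ≤ φ.ker :=
      Subgroup.normalClosure_le_normal <|
        (S.forall_relators_eq_one_iff φ v₀).2 (by simpa [φ] using hM)
    have hcomm := (map_testWord_eq_one_iff φ v).1 (hφ hv)
    simp only [φ, lift_apply_of] at hcomm
    exact hH v hcomm
  · intro hv
    rw [← QuotientGroup.ker_mk' (Subgroup.normalClosure _), MonoidHom.mem_ker,
      map_testWord_eq_one_iff]
    refine IsModel.commute_of_reflTransGen
      ((S.forall_relators_eq_one_iff _ v₀).1 fun w hw => ?_) hv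
    exact (QuotientGroup.eq_one_iff w).2 (Subgroup.subset_normalClosure hw)

end AffineSystem

theorem eq_and_eq_of_add_mul_eq {b r r' : ℕ} {m m' : ℤ} (hr : r < b) (hr' : r' < b)
    (h : (r + b * m : ℤ) = r' + b * m') : r = r' ∧ m = m' := by
  have hmod : (r : ℤ) = r' := by
    simpa [Int.emod_eq_of_lt, hr, hr'] using congrArg (· % (b : ℤ)) h
  rw [hmod, add_right_inj] at h
  exact ⟨by exact_mod_cast hmod, mul_left_cancel₀ (Nat.cast_ne_zero.2 (Nat.ne_zero_of_lt hr)) h⟩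

section DigitCode

variable (Γ : Type*) [Fintype Γ]

/-- The base in which stacks of letters of `Γ` are read as numbers; the digit `0` is the empty
part of a stack. -/
abbrev stackBase : ℕ := Fintype.card Γ + 1

variable {Γ}

/-- The digit of the top letter of a stack. -/
noncomputable def topDigit : Option Γ → ℕ
  | none => 0
  | some a => Fintype.equivFin Γ a + 1

/-- A stack read as a number in base `stackBase Γ`, the top letter being least significant. -/
noncomputable def stackCode (L : List Γ) : ℕ :=
  Nat.ofDigits (stackBase Γ) (L.map fun a => topDigit (some a))

theorem topDigit_lt (o : Option Γ) : topDigit o < stackBase Γ := by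
  cases o with
  | none => exact Nat.succ_pos _
  | some a => exact Nat.succ_lt_succ (Fintype.equivFin Γ a).isLt

theorem topDigit_injective : Function.Injective (topDigit (Γ := Γ)) := by
  rintro (_ | a) (_ | a') h
  · rfl
  · simp [topDigit] at h
  · simp [topDigit] at h
  · rw [(Fintype.equivFin Γ).injective (Fin.ext (Nat.succ_injective h))]

theorem stackCode_eq (L : List Γ) :
    stackCode L = topDigit L.head? + stackBase Γ * stackCode L.tail := by
  cases L <;> simp [stackCode, topDigit, Nat.ofDigits_cons]

theorem stackCode_append (L L' : List Γ) :
    stackCode (L ++ L') = stackCode L + stackBase Γ ^ L.length * stackCode L' := by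
  simp only [stackCode, List.map_append, Nat.ofDigits_append, List.length_map]

theorem head?_eq_and_stackCode_tail_eq {L L' : List Γ} (h : stackCode L = stackCode L') :
    L.head? = L'.head? ∧ stackCode L.tail = stackCode L'.tail := by
  rw [stackCode_eq L, stackCode_eq L'] at h
  have hcast := congrArg (Nat.cast : ℕ → ℤ) h
  rw [Nat.cast_add, Nat.cast_add, Nat.cast_mul, Nat.cast_mul] at hcast
  obtain ⟨hhead, htail⟩ := eq_and_eq_of_add_mul_eq (topDigit_lt _) (topDigit_lt _) hcast
  exact ⟨topDigit_injective hhead, Nat.cast_injective htail⟩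

theorem stackCode_injective : Function.Injective (stackCode (Γ := Γ)) := by
  intro L L' h
  induction L generalizing L' with
  | nil => exact (List.head?_eq_none_iff.1 (head?_eq_and_stackCode_tail_eq h).1.symm).symm
  | cons a L ih =>
    obtain ⟨hhead, htail⟩ := head?_eq_and_stackCode_tail_eq h
    rw [List.eq_cons_of_mem_head? hhead.symm, ← ih htail]

end DigitCode

/-- A machine with finitely many stacks: in state `q` it removes the top letter `o` of
`stack q` (if there is one), pushes the word `write q o` on the same stack and moves to the state
`next q o`, where `none` is the halting state. -/
structure StackMachine (Q K Γ : Type*) where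
  stack : Q → K
  next : Q → Option Γ → Option Q
  write : Q → Option Γ → List Γ

namespace StackMachine

variable {Q K Γ : Type*}

/-- A state together with the contents of the stacks. -/
abbrev Cfg (Q K Γ : Type*) := Option Q × (K → List Γ)

section Encode

variable [Fintype Q] [Fintype Γ]

/-- The number of a state, including the halting one. -/
noncomputable def stateCode (s : Option Q) : ℕ := Fintype.equivFin (Option Q) s

/-- The vector of the numbers of the state (at `none`) and of the stacks. -/
noncomputable def encode (x : Cfg Q K Γ) : Option K → ℤ
  | none => stateCode x.1
  | some κ => stackCode (x.2 κ)

theorem stateCode_lt (s : Option Q) : stateCode s < Fintype.card (Option Q) :=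
  (Fintype.equivFin (Option Q) s).isLt

theorem stateCode_injective : Function.Injective (stateCode (Q := Q)) :=
  Fin.val_injective.comp (Fintype.equivFin (Option Q)).injective

theorem encode_injective : Function.Injective (encode (Q := Q) (K := K) (Γ := Γ)) := by
  rintro ⟨s, T⟩ ⟨s', T'⟩ h
  have hs : s = s' := stateCode_injective (Nat.cast_injective (congrFun h none))
  have hT : T = T' :=
    funext fun κ => stackCode_injective (Nat.cast_injective (congrFun h (some κ)))
  rw [hs, hT]

end Encode

variable [DecidableEq K] (M : StackMachine Q K Γ)

/-- The transition function, undefined on halted configurations. -/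
def step : Cfg Q K Γ → Option (Cfg Q K Γ)
  | (none, _) => none
  | (some q, T) => some (M.next q (T (M.stack q)).head?, Function.update T (M.stack q)
      (M.write q (T (M.stack q)).head? ++ (T (M.stack q)).tail))

variable [Fintype Q] [Fintype Γ]

/-- The affine system of the machine. The map `(q, o)` acts on the encodings of the configurations
with state `q` and top letter `o`; its parameter is the encoding of what remains when these are
removed. -/
noncomputable def affineSystem : AffineSystem (Option K) (Q × Option Γ) where
  srcOffset qo
    | none => stateCode (some qo.1)
    | some κ => if κ = M.stack qo.1 then topDigit qo.2 else 0
  srcScale qo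
    | none => Fintype.card (Option Q)
    | some κ => if κ = M.stack qo.1 then stackBase Γ else 1
  tgtOffset qo
    | none => stateCode (M.next qo.1 qo.2)
    | some κ => if κ = M.stack qo.1 then stackCode (M.write qo.1 qo.2) else 0
  tgtScale qo
    | none => Fintype.card (Option Q)
    | some κ => if κ = M.stack qo.1 then stackBase Γ ^ (M.write qo.1 qo.2).length else 1
  srcScale_ne_zero qo i := by
    cases i with
    | none => exact Nat.cast_ne_zero.2 Fintype.card_ne_zero
    | some κ => dsimp only; split_ifs <;> positivity
  tgtScale_ne_zero qo i := by
    cases i with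
    | none => exact Nat.cast_ne_zero.2 Fintype.card_ne_zero
    | some κ => dsimp only; split_ifs <;> positivity

theorem src_inj {j j' : Q × Option Γ} {u u' : Option K → ℤ}
    (h : M.affineSystem.src j u = M.affineSystem.src j' u') : j = j' ∧ u = u' := by
  obtain ⟨q, o⟩ := j
  obtain ⟨q', o'⟩ := j'
  obtain ⟨hq, hnone⟩ := eq_and_eq_of_add_mul_eq (stateCode_lt _) (stateCode_lt _) (congrFun h none)
  obtain rfl : q = q' := Option.some_injective _ (stateCode_injective hq)
  have hstack (κ : K) := congrFun h (some κ)
  simp only [AffineSystem.src, affineSystem, Pi.add_apply, Pi.mul_apply] at hstack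
  have htop := hstack (M.stack q)
  simp only [if_true] at htop
  obtain ⟨ho, htail⟩ := eq_and_eq_of_add_mul_eq (topDigit_lt _) (topDigit_lt _) htop
  refine ⟨Prod.ext rfl (topDigit_injective ho), funext fun i => ?_⟩
  rcases i with _ | κ
  · exact hnone
  · by_cases hκ : κ = M.stack q
    · rw [hκ]; exact htail
    · simpa [hκ] using hstack κ

theorem exists_src_tgt_of_step {x y : Cfg Q K Γ} (h : M.step x = some y) :
    ∃ j u, encode x = M.affineSystem.src j u ∧ encode y = M.affineSystem.tgt j u := by
  obtain ⟨_ | q, T⟩ := x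
  · cases h
  obtain rfl := Option.some_injective _ h
  refine ⟨(q, (T (M.stack q)).head?), fun
    | none => 0
    | some κ => stackCode (if κ = M.stack q then (T κ).tail else T κ), funext fun i => ?_,
    funext fun i => ?_⟩
  · rcases i with _ | κ
    · simp [encode, affineSystem, AffineSystem.src]
    · by_cases hκ : κ = M.stack q
      · subst hκ
        simpa [encode, affineSystem, AffineSystem.src] using
          congrArg (Nat.cast : ℕ → ℤ) (stackCode_eq (T (M.stack q)))
      · simp [encode, affineSystem, AffineSystem.src, hκ]
  · rcases i with _ | κ
    · simp [encode, affineSystem, AffineSystem.tgt]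
    · by_cases hκ : κ = M.stack q
      · subst hκ
        simp [encode, affineSystem, AffineSystem.tgt, stackCode_append]
      · simp [encode, affineSystem, AffineSystem.tgt, hκ]

theorem exists_step_of_encode_eq_src {x : Cfg Q K Γ} {j : Q × Option Γ} {u : Option K → ℤ}
    (h : encode x = M.affineSystem.src j u) :
    ∃ y, M.step x = some y ∧ encode y = M.affineSystem.tgt j u := by
  obtain ⟨_ | q, T⟩ := x
  · have hnone := congrFun h none
    rw [encode, ← add_zero (stateCode _ : ℤ), ← mul_zero (Fintype.card (Option Q) : ℤ)] at hnone
    obtain ⟨hstate, -⟩ :=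
      eq_and_eq_of_add_mul_eq (stateCode_lt none) (stateCode_lt (some j.1)) hnone
    cases stateCode_injective hstate
  · refine ⟨_, rfl, ?_⟩
    obtain ⟨j', u', hsrc, htgt⟩ := M.exists_src_tgt_of_step (x := (some q, T)) rfl
    obtain ⟨rfl, rfl⟩ := M.src_inj (hsrc.symm.trans h)
    exact htgt

theorem step_encode_iff {x : Cfg Q K Γ} {v : Option K → ℤ} :
    M.affineSystem.Step (encode x) v ↔ ∃ y ∈ M.step x, encode y = v := by
  constructor
  · rintro ⟨j, u, hsrc, rfl⟩
    exact M.exists_step_of_encode_eq_src hsrc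
  · rintro ⟨y, hy, rfl⟩
    exact M.exists_src_tgt_of_step hy

theorem reflTransGen_encode_iff {x y : Cfg Q K Γ} :
    Relation.ReflTransGen M.affineSystem.Step (encode x) (encode y) ↔
      StateTransition.Reaches M.step x y := by
  refine ⟨fun h => ?_,
    fun h => h.lift encode fun a b hab => M.exists_src_tgt_of_step hab⟩
  obtain ⟨x', hx'⟩ : ∃ x', x' = encode x := ⟨_, rfl⟩
  rw [← hx'] at h
  induction h using Relation.ReflTransGen.head_induction_on generalizing x with
  | refl => rw [encode_injective hx']; exact .refl
  | head hstep _ ih =>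
    subst hx'
    obtain ⟨x', hx', rfl⟩ := M.step_encode_iff.1 hstep
    exact .head hx' (ih rfl)

theorem reflTransGen_tgt_of_src {T : K → List Γ} (j : Q × Option Γ) (u : Option K → ℤ)
    (h : Relation.ReflTransGen M.affineSystem.Step (M.affineSystem.src j u)
      (encode (Q := Q) (none, T))) :
    Relation.ReflTransGen M.affineSystem.Step (M.affineSystem.tgt j u)
      (encode (Q := Q) (none, T)) := by
  rcases h.cases_head with h | ⟨_, ⟨j', u', hsrc, rfl⟩, h⟩
  · obtain ⟨y, hy, -⟩ := M.exists_step_of_encode_eq_src h.symm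
    cases hy
  · obtain ⟨rfl, rfl⟩ := M.src_inj hsrc
    exact h

theorem testWord_mem_normalClosure_iff [Fintype K] (x : Cfg Q K Γ) (T : K → List Γ) :
    AffineSystem.testWord (Q × Option Γ) (encode x) ∈
        Subgroup.normalClosure (M.affineSystem.relators (encode (Q := Q) (none, T))) ↔
      (none, T) ∈ StateTransition.eval M.step x := by
  rw [AffineSystem.testWord_mem_normalClosure_iff _ M.reflTransGen_tgt_of_src,
    M.reflTransGen_encode_iff, StateTransition.mem_eval]
  exact (and_iff_left rfl).symm

end StackMachine

theorem toList_head?_append_tail {α : Type*} (L : List α) : L.head?.toList ++ L.tail = L := by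
  cases L <;> rfl

theorem some_mem_stmts_iff {K Λ σ : Type*} {Γ : K → Type*} {M : Λ → Turing.TM2.Stmt Γ Λ σ}
    {S : Finset Λ} {q : Turing.TM2.Stmt Γ Λ σ} :
    some q ∈ Turing.TM2.stmts M S ↔ ∃ l ∈ S, q ∈ Turing.TM2.stmts₁ (M l) := by
  simp [Turing.TM2.stmts]

namespace StackMachine

open Turing TM2

variable {Q K Γ Λ σ : Type*}

/-- The machine obtained by keeping only the states of a set `P` closed under transitions. -/
def restrict (M : StackMachine Q K Γ) (P : Set Q)
    (hP : ∀ q ∈ P, ∀ o, ∀ q' ∈ M.next q o, q' ∈ P) : StackMachine P K Γ where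
  stack q := M.stack q
  next q o := (M.next q o).pmap Subtype.mk (hP q q.2 o)
  write q := M.write q

section OfTM2

variable [Inhabited K] (M : Λ → Stmt (fun _ : K => Γ) Λ σ)

/-- The stack machine executing the program `M` statement by statement: its states are the
statements together with the values of the internal variable. Statements that do not use a stack
leave the stack `default` unchanged. -/
def ofTM2 : StackMachine (Stmt (fun _ : K => Γ) Λ σ × σ) K Γ where
  stack
    | (.push k _ _, _) | (.peek k _ _, _) | (.pop k _ _, _) => k
    | _ => default
  next
    | (.push _ _ q, v), _ => some (q, v)
    | (.peek _ f q, v), o | (.pop _ f q, v), o => some (q, f v o)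
    | (.load f q, v), _ => some (q, f v)
    | (.branch f q₁ q₂, v), _ => some (cond (f v) q₁ q₂, v)
    | (.goto f, v), _ => some (M (f v), v)
    | (.halt, _), _ => none
  write
    | (.push _ f _, v), o => f v :: o.toList
    | (.pop _ _ _, _), _ => []
    | _, o => o.toList

theorem next_ofTM2_mem_stmts [Inhabited Λ] {S : Finset Λ} (hS : Supports M S)
    {q : Stmt (fun _ : K => Γ) Λ σ} (hq : some q ∈ stmts M S) {v : σ} {o : Option Γ}
    {q' : Stmt (fun _ : K => Γ) Λ σ × σ} (hq' : q' ∈ (ofTM2 M).next (q, v) o) :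
    some q'.1 ∈ stmts M S := by
  have hsupp := stmts_supportsStmt hS hq
  cases q with
  | goto f =>
    obtain rfl := Option.some_injective _ hq'
    exact some_mem_stmts_iff.2 ⟨f v, hsupp v, stmts₁_self⟩
  | halt => cases hq'
  | branch f q₁ q₂ =>
    obtain rfl := Option.some_injective _ hq'
    refine stmts_trans ?_ hq
    cases f v <;> simp [stmts₁, stmts₁_self]
  | _ =>
    obtain rfl := Option.some_injective _ hq'
    exact stmts_trans (by simp [stmts₁, stmts₁_self]) hq

/-- The configuration of `ofTM2 M` that represents a configuration of `M`. -/
def ofTM2Cfg (c : TM2.Cfg (fun _ : K => Γ) Λ σ) : Cfg (Stmt (fun _ : K => Γ) Λ σ × σ) K Γ :=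
  (c.l.map fun l => (M l, c.var), c.stk)

end OfTM2

variable [DecidableEq K]

theorem eval_restrict_step (M : StackMachine Q K Γ) {P : Set Q}
    (hP : ∀ q ∈ P, ∀ o, ∀ q' ∈ M.next q o, q' ∈ P) (x : Cfg P K Γ) :
    StateTransition.eval M.step (Prod.map (Option.map Subtype.val) id x) =
      Prod.map (Option.map Subtype.val) id <$>
        StateTransition.eval (M.restrict P hP).step x := by
  refine StateTransition.tr_eval' _ _ (Prod.map (Option.map Subtype.val) id)
    (StateTransition.fun_respects.2 ?_) x
  rintro ⟨_ | q, T⟩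
  · rfl
  · exact .single (by simp [step, restrict, Option.map_pmap])

theorem none_mem_eval_restrict_step (M : StackMachine Q K Γ) {P : Set Q}
    (hP : ∀ q ∈ P, ∀ o, ∀ q' ∈ M.next q o, q' ∈ P) (q : P) (T T' : K → List Γ) :
    (none, T') ∈ StateTransition.eval (M.restrict P hP).step (some q, T) ↔
      (none, T') ∈ StateTransition.eval M.step (some ↑q, T) := by
  have heval := M.eval_restrict_step hP (some q, T)
  rw [Prod.map_apply, Option.map_some, id] at heval
  simp [heval]

theorem step_of_write_eq {M : StackMachine Q K Γ} {q : Q} (hwrite : ∀ o, M.write q o = o.toList)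
    {T : K → List Γ} :
    M.step (some q, T) = some (M.next q (T (M.stack q)).head?, T) := by
  rw [step, hwrite, toList_head?_append_tail, Function.update_eq_self]

variable [Inhabited K] (M : Λ → Stmt (fun _ : K => Γ) Λ σ)

theorem reaches₁_ofTM2Cfg_stepAux (q : Stmt (fun _ : K => Γ) Λ σ) (v : σ) (T : K → List Γ) :
    StateTransition.Reaches₁ (ofTM2 M).step (some (q, v), T) (ofTM2Cfg M (stepAux q v T)) := by
  induction q generalizing v T with
  | push k f q ih =>
    refine .head (Option.mem_def.2 ?_) (ih v (Function.update T k (f v :: T k)))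
    exact congrArg (fun L => some (some (q, v), Function.update T k (f v :: L)))
      (toList_head?_append_tail (T k))
  | pop k f q ih => exact .head rfl (ih _ _)
  | peek k f q ih => exact .head (step_of_write_eq fun _ => rfl) (ih _ _)
  | load f q ih => exact .head (step_of_write_eq fun _ => rfl) (ih _ _)
  | branch f q₁ q₂ ih₁ ih₂ =>
    refine .head (b := (some (cond (f v) q₁ q₂, v), T)) (step_of_write_eq fun _ => rfl) ?_
    rw [stepAux]
    cases f v
    · exact ih₂ v T
    · exact ih₁ v T
  | goto f => exact .single (step_of_write_eq fun _ => rfl)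
  | halt => exact .single (step_of_write_eq fun _ => rfl)

theorem eval_ofTM2_step (c : TM2.Cfg (fun _ : K => Γ) Λ σ) :
    StateTransition.eval (ofTM2 M).step (ofTM2Cfg M c) =
      ofTM2Cfg M <$> StateTransition.eval (TM2.step M) c := by
  refine StateTransition.tr_eval' _ _ (ofTM2Cfg M) (StateTransition.fun_respects.2 ?_) c
  rintro ⟨_ | l, v, T⟩
  · rfl
  · exact reaches₁_ofTM2Cfg_stepAux M (M l) v T

theorem none_mem_eval_ofTM2_step (c : TM2.Cfg (fun _ : K => Γ) Λ σ) (T : K → List Γ) :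
    (none, T) ∈ StateTransition.eval (ofTM2 M).step (ofTM2Cfg M c) ↔
      ∃ v, ⟨none, v, T⟩ ∈ StateTransition.eval (TM2.step M) c := by
  rw [eval_ofTM2_step, Part.map_eq_map, Part.mem_map_iff]
  constructor
  · rintro ⟨⟨_ | l, v, T'⟩, hmem, h⟩
    · cases h; exact ⟨v, hmem⟩
    · cases h
  · rintro ⟨v, hmem⟩
    exact ⟨_, hmem, rfl⟩

theorem exists_eval_iff_of_supports [Inhabited Λ] [Finite σ] {S : Finset Λ} (hS : Supports M S)
    {l : Λ} (hl : l ∈ S) (v : σ) :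
    ∃ (P : Set (Stmt (fun _ : K => Γ) Λ σ × σ)) (_ : Finite P) (N : StackMachine P K Γ) (q : P),
      ∀ T T', (none, T') ∈ StateTransition.eval N.step (some q, T) ↔
        ∃ v', ⟨none, v', T'⟩ ∈ StateTransition.eval (TM2.step M) ⟨some l, v, T⟩ := by
  have hfinite : {q | some q ∈ stmts M S}.Finite :=
    (stmts M S).finite_toSet.preimage (Option.some_injective _).injOn
  refine ⟨{x | some x.1 ∈ stmts M S},
    ((hfinite.prod Set.finite_univ).subset fun x hx => ⟨hx, trivial⟩).to_subtype,
    (ofTM2 M).restrict _ fun q hq o q' hq' => next_ofTM2_mem_stmts M hS hq hq',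
    ⟨(M l, v), some_mem_stmts_iff.2 ⟨l, hl, stmts₁_self⟩⟩, fun T T' => ?_⟩
  rw [none_mem_eval_restrict_step]
  exact none_mem_eval_ofTM2_step M ⟨some l, v, T⟩ T'

end StackMachine

/-- A family of elements of a free group that is given by a computable family of words. -/
def ComputableWord {α Z : Type*} [Primcodable α] [Primcodable Z] (g : α → FreeGroup Z) : Prop :=
  ∃ w : α → List (Z × Bool), Computable w ∧ ∀ x, FreeGroup.mk (w x) = g x

namespace ComputableWord

variable {α Z : Type*} [Primcodable α] [Primcodable Z] {g h : α → FreeGroup Z}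

theorem const (g : FreeGroup Z) : ComputableWord fun _ : α => g := by
  obtain ⟨w, rfl⟩ := Quot.exists_rep g
  exact ⟨fun _ => w, Computable.const w, fun _ => rfl⟩

theorem mul (hg : ComputableWord g) (hh : ComputableWord h) :
    ComputableWord fun x => g x * h x := by
  obtain ⟨w, hw, hwg⟩ := hg
  obtain ⟨w', hw', hwh⟩ := hh
  refine ⟨fun x => w x ++ w' x, Computable.list_append.comp hw hw', fun x => ?_⟩
  rw [← FreeGroup.mul_mk, hwg, hwh]

theorem inv (hg : ComputableWord g) : ComputableWord fun x => (g x)⁻¹ := by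
  obtain ⟨w, hw, hwg⟩ := hg
  have hletter : Primrec fun z : Z × Bool => (z.1, !z.2) :=
    Primrec.fst.pair (Primrec.not.comp Primrec.snd)
  have hinvRev : Primrec (FreeGroup.invRev (α := Z)) :=
    Primrec.list_reverse.comp (Primrec.list_map Primrec.id (hletter.comp Primrec.snd).to₂)
  refine ⟨fun x => FreeGroup.invRev (w x), hinvRev.to_comp.comp hw, fun x => ?_⟩
  rw [← FreeGroup.inv_mk, hwg]

theorem pow (g : FreeGroup Z) {e : α → ℕ} (he : Computable e) :
    ComputableWord fun x => g ^ e x := by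
  obtain ⟨w, rfl⟩ := Quot.exists_rep g
  let power (n : ℕ) : List (Z × Bool) := Nat.rec [] (fun _ u => w ++ u) n
  have hpower : Primrec power :=
    Primrec.nat_rec₁ [] (Primrec.list_append.comp (Primrec.const w) Primrec.snd).to₂
  have hmk (n : ℕ) : FreeGroup.mk (power n) = FreeGroup.mk w ^ n := by
    induction n with
    | zero => rfl
    | succ n ih => rw [pow_succ', ← ih]; rfl
  exact ⟨fun x => power (e x), hpower.to_comp.comp he, fun x => hmk (e x)⟩

theorem list_prod {ι : Type*} {g : ι → α → FreeGroup Z} (hg : ∀ i, ComputableWord (g i))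
    (L : List ι) : ComputableWord fun x => (L.map fun i => g i x).prod := by
  induction L with
  | nil => exact const 1
  | cons i L ih => simpa only [List.map_cons, List.prod_cons] using (hg i).mul ih

theorem zpowConj {ι : Type*} [Fintype ι] (y : ι → FreeGroup Z) (t : FreeGroup Z)
    {v : α → ι → ℤ} (hv : ∀ i, ComputableWord fun x => y i ^ v x i) :
    ComputableWord fun x => zpowConj y t (v x) :=
  have hprod := list_prod hv Finset.univ.toList
  (hprod.mul (const t)).mul hprod.inv

theorem semiconjRelator (a : FreeGroup Z) (hg : ComputableWord g) (hh : ComputableWord h) :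
    ComputableWord fun x => semiconjRelator a (g x) (h x) :=
  (((const a).mul hg).mul (const a).inv).mul hh.inv

theorem millerWord (a b c : FreeGroup Z) (hg : ComputableWord g) (k : ℕ) :
    ComputableWord fun x => millerWord a b c (g x) k :=
  ((const _).mul hg).mul (const _) |>.mul (const _)

end ComputableWord

section WordsSet

variable {Z : Type*}

theorem wordsSet_append (L L' : List (List (Z × Bool))) :
    wordsSet (L ++ L') = wordsSet L ∪ wordsSet L' := by
  ext g
  simp only [wordsSet, List.mem_append, or_and_right, exists_or, Set.mem_union, Set.mem_ofPred_eq]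

theorem wordsSet_ofFn {m : ℕ} (w : Fin m → List (Z × Bool)) :
    wordsSet (List.ofFn w) = Set.range fun k => FreeGroup.mk (w k) := by
  ext g
  simp only [wordsSet, List.mem_ofFn, Set.mem_ofPred_eq, Set.mem_range, exists_exists_eq_and]
  exact exists_congr fun k => eq_comm

theorem exists_wordsSet_eq {B : Set (FreeGroup Z)} (hB : B.Finite) : ∃ L, wordsSet L = B := by
  obtain ⟨m, g, rfl⟩ := hB.fin_embedding
  choose w hw using fun k => Quot.exists_rep (g k)
  exact ⟨List.ofFn w, (wordsSet_ofFn w).trans (congrArg Set.range (funext hw))⟩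

theorem exists_computable_wordsSet_eq {α : Type*} [Primcodable α] [Primcodable Z]
    {B : Set (FreeGroup Z)} (hB : B.Finite) {m : ℕ} {g : Fin m → α → FreeGroup Z}
    (hg : ∀ k, ComputableWord (g k)) :
    ∃ f, Computable f ∧ ∀ x, wordsSet (f x) = B ∪ Set.range fun k => g k x := by
  obtain ⟨L, rfl⟩ := exists_wordsSet_eq hB
  choose w hw hwg using hg
  refine ⟨fun x => L ++ List.ofFn fun k => w k x,
    Computable.list_append.comp (Computable.const L) (Computable.list_ofFn hw), fun x => ?_⟩
  simp only [wordsSet_append, wordsSet_ofFn, hwg]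

end WordsSet

section BinaryStack

open Turing PartrecToTM2

theorem trNat_bit {b : Bool} {n : ℕ} (h : Nat.bit b n ≠ 0) :
    trNat (Nat.bit b n) = (bif b then Γ'.bit1 else Γ'.bit0) :: trNat n := by
  rw [trNat, trNat, ← Num.ofNat'_eq, Num.ofNat'_bit, Num.ofNat'_eq]
  cases b with
  | true => cases (n : Num) <;> rfl
  | false =>
    cases hn : (n : Num) with
    | zero => exact absurd (by rw [Num.of_nat_inj.1 (hn.trans Nat.cast_zero.symm)]; rfl) h
    | pos p => rfl

/-- The digit of the letter that represents a bit. -/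
noncomputable def bitDigit (b : Bool) : ℕ := topDigit (some (bif b then Γ'.bit1 else Γ'.bit0))

theorem stackCode_trList_of_ne_zero {n : ℕ} (hn : n ≠ 0) :
    stackCode (trList [n]) = bitDigit n.bodd + stackBase Γ' * stackCode (trList [n.div2]) := by
  rw [← Nat.bit_bodd_div2 n] at hn
  conv_lhs => rw [← Nat.bit_bodd_div2 n]
  rw [trList, trNat_bit hn, stackCode_eq]
  rfl

theorem primrec_stackCode_trList : Primrec fun n => stackCode (trList [n]) := by
  let rest (n : ℕ) : List ℕ := if n = 0 then [] else [n.div2]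
  let code (n : ℕ) (ih : List ℕ) : ℕ :=
    if n = 0 then stackCode (trList [0]) else bitDigit n.bodd + stackBase Γ' * ih.headI
  have hrest : Primrec rest := Primrec.ite (Primrec.eq.comp Primrec.id (Primrec.const 0))
    (Primrec.const []) (Primrec.list_cons.comp Primrec.nat_div2 (Primrec.const []))
  have hcode : Primrec₂ code :=
    Primrec.ite (Primrec.eq.comp Primrec.fst (Primrec.const 0)) (Primrec.const _) <|
      Primrec.nat_add.comp ((Primrec.dom_finite bitDigit).comp (Primrec.nat_bodd.comp Primrec.fst))
        (Primrec.nat_mul.comp (Primrec.const _) (Primrec.list_headI.comp Primrec.snd))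
  refine Primrec.nat_omega_rec' _ Primrec.id hrest (Primrec.option_some.comp₂ hcode)
    (fun n m hm => ?_) fun n => ?_
  · have hn : n ≠ 0 := by rintro rfl; simp [rest] at hm
    obtain rfl : m = n.div2 := by simpa [rest, hn] using hm
    exact Nat.binaryRec_decreasing hn
  · obtain rfl | hn := eq_or_ne n 0
    · simp [code]
    · rw [stackCode_trList_of_ne_zero hn]
      simp [code, rest, hn]

end BinaryStack

section HaltingProblem

open Turing PartrecToTM2

theorem exists_code_of_rePred {p : ℕ → Prop} (hp : REPred p) :
    ∃ c : ToPartrec.Code, ∀ n L, L ∈ c.eval [n] ↔ L = [0] ∧ p n := by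
  have hzero : Partrec fun n => (Part.assert (p n) fun _ => Part.some ()).map fun _ => 0 :=
    hp.map (Computable.const 0).to₂
  obtain ⟨c, hc⟩ := ToPartrec.Code.exists_code (Nat.Partrec'.part_iff₁.2 hzero)
  refine ⟨c, fun n L => ?_⟩
  rw [show c.eval [n] = _ from hc ⟨[n], rfl⟩]
  simp [Part.map_eq_map, List.Vector.head, eq_comm, and_comm]

theorem exists_stackMachine_of_rePred {p : ℕ → Prop} (hp : REPred p) :
    ∃ (Q : Type) (_ : Finite Q) (M : StackMachine Q K' Γ') (q : Q) (T : K' → List Γ'),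
      ∀ n, (none, T) ∈
        StateTransition.eval M.step (some q, K'.elim (trList [n]) [] [] []) ↔ p n := by
  obtain ⟨c, hc⟩ := exists_code_of_rePred hp
  let _ : Inhabited Λ' := ⟨trNormal c Cont'.halt⟩
  have hsupports : TM2.Supports tr (codeSupp c Cont'.halt) := tr_supports c Cont'.halt
  obtain ⟨Q, hQ, M, q, hM⟩ := StackMachine.exists_eval_iff_of_supports tr hsupports
    (l := trNormal c Cont'.halt) hsupports.1 none
  refine ⟨Q, hQ, M, q, K'.elim (trList [0]) [] [] [], fun n => ?_⟩
  have heval (x : Cfg') :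
      x ∈ StateTransition.eval (TM2.step tr) (init c [n]) ↔ p n ∧ halt [0] = x := by
    rw [tr_eval]
    exact (Part.mem_map_iff _).trans (by simp only [hc, and_assoc, exists_eq_left])
  rw [hM]
  exact ⟨fun ⟨_, hx⟩ => ((heval _).1 hx).1, fun hn => ⟨none, (heval _).2 ⟨hn, rfl⟩⟩⟩

end HaltingProblem

section WordProblem

open Turing PartrecToTM2 FreeGroup

theorem finite_stackIndex : Finite K' :=
  Set.finite_univ_iff.1 <| (Set.toFinite {K'.main, K'.rev, K'.aux, K'.stack}).subset fun κ _ => by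
    cases κ <;> simp

theorem exists_wordProblem_of_rePred {p : ℕ → Prop} (hp : REPred p) :
    ∃ (X : Type) (_ : Encodable X) (R : Set (FreeGroup X)) (W : ℕ → FreeGroup X), R.Finite ∧
      (∀ φ : FreeGroup X →* FreeGroup (Fin 2), ComputableWord fun n => φ (W n)) ∧
      ∀ n, W n ∈ Subgroup.normalClosure R ↔ p n := by
  obtain ⟨Q, _, M, q, T, hM⟩ := exists_stackMachine_of_rePred hp
  let _ := Fintype.ofFinite Q
  have := finite_stackIndex
  let _ := Fintype.ofFinite K'
  let _ := Encodable.ofCountable (AffineGenerator (Option K') (Q × Option Γ'))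
  let v (n : ℕ) : Option K' → ℤ :=
    StackMachine.encode (some q, K'.elim (trList [n]) [] [] [])
  refine ⟨_, inferInstance,
    M.affineSystem.relators (StackMachine.encode (Q := Q) (none, T)),
    fun n => AffineSystem.testWord (Q × Option Γ') (v n),
    AffineSystem.finite_relators _ _, fun φ => ?_,
    fun n => (M.testWord_mem_normalClosure_iff _ T).trans (hM n)⟩
  have hv (i : Option K') : ComputableWord fun n => φ (of (.x i)) ^ v n i := by
    rcases i with _ | κ
    · exact ComputableWord.const (φ (of (.x none)) ^ (StackMachine.stateCode (some q) : ℤ))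
    cases κ <;> simp only [v, StackMachine.encode, K'.elim, zpow_natCast]
    case main => exact ComputableWord.pow _ primrec_stackCode_trList.to_comp
    all_goals exact ComputableWord.const _
  have hconj := ComputableWord.zpowConj (φ ∘ of ∘ .x) (φ (of .t)) hv
  simpa only [AffineSystem.testWord, map_semiconjRelator, map_zpowConj] using
    ComputableWord.semiconjRelator (φ (of .k)) hconj hconj

end WordProblem

theorem exists_presentations_of_rePred {p : ℕ → Prop} (hp : REPred p) :
    ∃ (c : ℕ) (f : ℕ → List (List (Fin 2 × Bool))), Computable f ∧
      ∀ n, (wordsSet (f n)).ncard = c ∧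
        Subsingleton (Abelianization (PresentedGroup (wordsSet (f n)))) ∧
        (p n → Subsingleton (PresentedGroup (wordsSet (f n)))) ∧
        (¬ p n → Infinite (PresentedGroup (wordsSet (f n)))) := by
  obtain ⟨X, _, R, W, hR, hW, hp⟩ := exists_wordProblem_of_rePred hp
  obtain ⟨f, hf, hfW⟩ := exists_computable_wordsSet_eq (hR.image Miller.encode)
    fun k : Fin 3 => (hW Miller.encode).millerWord Miller.a Miller.b Miller.c k
  have hrelators (n : ℕ) : wordsSet (f n) = Miller.relators R (W n) := hfW n
  refine ⟨(Miller.encode '' R).ncard + 3, f, hf, fun n => ?_⟩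
  rw [hrelators, ← hp]
  exact ⟨Miller.ncard_relators hR _, Miller.subsingleton_abelianization R _,
    Miller.subsingleton_presentedGroup, Miller.infinite_presentedGroup⟩

theorem exists_rePred_not_computablePred : ∃ p : ℕ → Prop, REPred p ∧ ¬ ComputablePred p := by
  refine ⟨fun n => ((Denumerable.ofNat Nat.Partrec.Code n).eval 0).Dom,
    (ComputablePred.halting_problem_re 0).comp (Computable.ofNat _), fun h => ?_⟩
  refine ComputablePred.halting_problem 0 (ComputablePred.computable_of_manyOneReducible ?_ h)
  exact ⟨Encodable.encode, Computable.encode, fun c => by simp only [Denumerable.ofNat_encode]⟩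

/-- Theorem 3.4 (Miller): there is a computable sequence `(Σ_n)` of finite subsets of the
free group on two generators, of constant cardinality `c`, such that each `⟨x,y | Σ_n⟩`
has torsion abelianization (zero first Betti number), is trivial or infinite, and the set
of `n` with `⟨x,y | Σ_n⟩` trivial is recursively enumerable but not recursive. -/
theorem stmt5 :
    ∃ (c : ℕ) (f : ℕ → List (List (Fin 2 × Bool))),
      Computable f ∧
      (∀ n : ℕ, (wordsSet (f n)).ncard = c) ∧
      (∀ n : ℕ, Monoid.IsTorsion (Abelianization (PresentedGroup (wordsSet (f n))))) ∧
      (∀ n : ℕ, Subsingleton (PresentedGroup (wordsSet (f n))) ∨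
        Infinite (PresentedGroup (wordsSet (f n)))) ∧
      (∃ g : ℕ →. Unit, Partrec g ∧
        ∀ n : ℕ, Subsingleton (PresentedGroup (wordsSet (f n))) ↔ (g n).Dom) ∧
      ¬ ComputablePred (fun n : ℕ => Subsingleton (PresentedGroup (wordsSet (f n)))) := by
  obtain ⟨p, hp, hp'⟩ := exists_rePred_not_computablePred
  obtain ⟨c, f, hf, hpres⟩ := exists_presentations_of_rePred hp
  choose hcard habelianization htrivial hinfinite using hpres
  have htrivial_iff (n : ℕ) : Subsingleton (PresentedGroup (wordsSet (f n))) ↔ p n :=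
    ⟨fun _ => of_not_not fun hn => not_finite_iff_infinite.2 (hinfinite n hn) inferInstance,
      htrivial n⟩
  refine ⟨c, f, hf, hcard, fun n => ?_, fun n => ?_, ?_, ?_⟩
  · exact isMulTorsion_of_finite
  · exact (em (p n)).imp (htrivial n) (hinfinite n)
  · exact ⟨_, hp, fun n => (htrivial_iff n).trans (by simp [Part.assert])⟩
  · simpa only [htrivial_iff] using hp'
end

section
/- Let H be a freely indecomposable group and h ∈ H. Let D be the amalgamated free product H ∗_{⟨h⟩} H of two copies of H along the cyclic subgroup generated by h, identified by the identity map (i.e., the pushout of the two copies of the inclusion Subgroup.zpowers h ↪ H). If there exist nontrivial groups G₁ and G₂ and a group isomorphism D ≃* G₁ ∗ G₂ (the free product of G₁ and G₂), then h = 1. (Lemma 3.3 of the paper.) -/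
/-- A group is freely indecomposable if whenever it is isomorphic to a free product
(coproduct) of two groups, one of the factors is trivial. -/
def FreelyIndecomposable (H : Type) [Group H] : Prop :=
  ∀ (A B : Type) (_ : Group A) (_ : Group B),
    Nonempty (H ≃* Monoid.Coprod A B) → Subsingleton A ∨ Subsingleton B

/-!
Stallings' notion of a bipolar structure replaces Bass–Serre theory. In a free product every
nontrivial element has a first and a last letter, and a product is reduced when these letters do
not meet in the same factor. Restricting this data to a subgroup `H`, call an element irreducible
if it is not a reduced product of two nontrivial elements. The irreducible elements generate `H`,
and together with `1` they form a groupoid whose objects are the possible ends of an element. If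
each irreducible element begins and ends alike, `H` is the free product of the vertex groups;
otherwise an irreducible `t` with different ends generates an infinite cyclic free factor.

Hence every element of a noncyclic freely indecomposable subgroup `H` begins and ends in the same
factor, and the same holds for all conjugates of `H`. After a conjugation making some nontrivial
element of `H` shortest, that element is a single letter, which forces `H` into its factor.

Conjugates of factors are malnormal and meet trivially, so once one vertex group of an
amalgam over a nontrivial subgroup lies in such a conjugate, all of them do, and they cannot
generate. If instead all vertex groups are cyclic, the amalgamated subgroup is central, and a
free product has trivial centre.
-/

open Monoid

universe u

section CoprodI

/-- The free product of a two-element family as a binary free product. -/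
def coprodIBoolEquivCoprod (M : Bool → Type*) [∀ b, Group (M b)] :
    CoprodI M ≃* Coprod (M true) (M false) :=
  MonoidHom.toMulEquiv
    (CoprodI.lift fun
      | true => Coprod.inl
      | false => Coprod.inr)
    (Coprod.lift CoprodI.of CoprodI.of)
    (CoprodI.ext_hom _ _ <| by rintro (_ | _) <;> ext x <;> simp)
    (by apply Coprod.hom_ext <;> ext x <;> simp)

theorem exists_coprodI_bool_mulEquiv (A B : Type u) [Group A] [Group B] [Nontrivial A]
    [Nontrivial B] : ∃ (M : Bool → Type u) (_ : ∀ b, Group (M b)),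
      (∀ b, Nontrivial (M b)) ∧ Nonempty (CoprodI M ≃* Coprod A B) :=
  ⟨Bool.rec B A, Bool.rec ‹Group B› ‹Group A›, Bool.rec ‹Nontrivial B› ‹Nontrivial A›,
    ⟨@coprodIBoolEquivCoprod (Bool.rec B A) (Bool.rec ‹Group B› ‹Group A›)⟩⟩

variable {ι : Type*} {M : ι → Type*} [∀ i, Group (M i)]

open Classical in
/-- The reduced word representing an element of a free product. -/
noncomputable def reducedWord (g : CoprodI M) : CoprodI.Word M := CoprodI.Word.equiv g

theorem prod_reducedWord (g : CoprodI M) : (reducedWord g).prod = g := by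
  classical exact CoprodI.Word.equiv.symm_apply_apply g

theorem reducedWord_prod (w : CoprodI.Word M) : reducedWord w.prod = w := by
  classical exact CoprodI.Word.equiv.apply_symm_apply w

theorem exists_neWord_prod_eq {g : CoprodI M} (hg : g ≠ 1) :
    ∃ i j, ∃ w : CoprodI.NeWord M i j, w.prod = g := by
  have hne : reducedWord g ≠ CoprodI.Word.empty := fun h =>
    hg (by rw [← prod_reducedWord g, h, CoprodI.Word.prod_empty])
  obtain ⟨i, j, w, hw⟩ := CoprodI.NeWord.of_word _ hne
  exact ⟨i, j, w, by rw [CoprodI.NeWord.prod, hw, prod_reducedWord]⟩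

/-- Unlike in `Monoid.CoprodI.lift_injective_of_ping_pong`, the base point makes any assumption on
the cardinality of the factors superfluous. -/
theorem coprodI_lift_injective_of_ping_pong_basepoint {G α : Type*} [Group G] [MulAction G α]
    (f : ∀ i, M i →* G) (X : ι → Set α) (x₀ : α) (hx₀ : ∀ i, x₀ ∉ X i)
    (hbase : ∀ i, ∀ m : M i, m ≠ 1 → f i m • x₀ ∈ X i)
    (hpp : ∀ i j, i ≠ j → ∀ m : M i, m ≠ 1 → ∀ x ∈ X j, f i m • x ∈ X i) :
    Function.Injective (CoprodI.lift f) := by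
  have hword {i j} (w : CoprodI.NeWord M i j) :
      ∀ x, (x = x₀ ∨ ∃ k, j ≠ k ∧ x ∈ X k) → CoprodI.lift f w.prod • x ∈ X i := by
    induction w with
    | singleton m hm =>
      rintro x (rfl | ⟨k, hk, hx⟩)
      · simpa using hbase _ m hm
      · simpa using hpp _ k hk m hm x hx
    | append w₁ hne w₂ ih₁ ih₂ =>
      intro x hx
      rw [CoprodI.NeWord.append_prod, map_mul, mul_smul]
      exact ih₁ _ (Or.inr ⟨_, hne, ih₂ x hx⟩)
  rw [injective_iff_map_eq_one]
  intro g hg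
  by_contra hne
  obtain ⟨i, j, w, rfl⟩ := exists_neWord_prod_eq hne
  have := hword w x₀ (Or.inl rfl)
  rw [hg, one_smul] at this
  exact hx₀ i this

end CoprodI

theorem FreelyIndecomposable.exists_eq_top {H : Type} [Group H] (hH : FreelyIndecomposable H)
    {S : Bool → Subgroup H} (hinj : Function.Injective (CoprodI.lift fun b => (S b).subtype))
    (hS : ⨆ b, S b = ⊤) : ∃ b, S b = ⊤ := by
  have hsurj : Function.Surjective (CoprodI.lift fun b => (S b).subtype) := by
    rw [← MonoidHom.range_eq_top, CoprodI.range_eq_iSup]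
    simpa only [Subgroup.range_subtype] using hS
  have e : H ≃* Coprod (S true) (S false) :=
    (MulEquiv.ofBijective _ ⟨hinj, hsurj⟩).symm.trans (coprodIBoolEquivCoprod fun b => S b)
  rw [iSup_bool_eq] at hS
  rcases hH (S true) (S false) inferInstance inferInstance ⟨e⟩ with h | h
  · exact ⟨false, by rwa [(S true).eq_bot_of_subsingleton, bot_sup_eq] at hS⟩
  · exact ⟨true, by rwa [(S false).eq_bot_of_subsingleton, sup_bot_eq] at hS⟩

/-- A bipolar structure in the sense of Stallings, over the trivial subgroup and with an arbitrary
type `α` of ends: `side g` is the end at which a nontrivial `g` begins, so that `side g⁻¹` is the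
end at which it finishes, and `g * h` is reduced if `side g⁻¹ ≠ side h`. The value `side 1` is
irrelevant. -/
structure Polarization (G α : Type*) [Group G] where
  side : G → α
  len : G → ℕ
  len_pos : ∀ {g}, g ≠ 1 → 0 < len g
  side_mul : ∀ {g h}, g ≠ 1 → h ≠ 1 → side g⁻¹ ≠ side h → side (g * h) = side g
  len_mul : ∀ {g h}, g ≠ 1 → h ≠ 1 → side g⁻¹ ≠ side h → len (g * h) = len g + len h

namespace Polarization

variable {G α : Type*} [Group G]

/-- The restriction of a polarization along an injective homomorphism. -/
def comap {K : Type*} [Group K] (P : Polarization G α) (f : K →* G)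
    (hf : Function.Injective f) : Polarization K α where
  side g := P.side (f g)
  len g := P.len (f g)
  len_pos hg := P.len_pos ((map_ne_one_iff f hf).mpr hg)
  side_mul hg hh hgh := by
    rw [map_inv] at hgh
    rw [map_mul, P.side_mul ((map_ne_one_iff f hf).mpr hg) ((map_ne_one_iff f hf).mpr hh) hgh]
  len_mul hg hh hgh := by
    rw [map_inv] at hgh
    rw [map_mul, P.len_mul ((map_ne_one_iff f hf).mpr hg) ((map_ne_one_iff f hf).mpr hh) hgh]

/-- The polarization obtained by identifying ends. -/
def map {β : Type*} (P : Polarization G α) (q : α → β) : Polarization G β where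
  side g := q (P.side g)
  len := P.len
  len_pos := P.len_pos
  side_mul hg hh hgh := congrArg q (P.side_mul hg hh (ne_of_apply_ne q hgh))
  len_mul hg hh hgh := P.len_mul hg hh (ne_of_apply_ne q hgh)

variable (P : Polarization G α)

theorem mul_ne_one {g h : G} (hgh : P.side g⁻¹ ≠ P.side h) : g * h ≠ 1 := fun h1 =>
  hgh (congrArg P.side (inv_eq_of_mul_eq_one_right h1))

theorem side_inv_mul {g h : G} (hg : g ≠ 1) (hh : h ≠ 1) (hgh : P.side g⁻¹ ≠ P.side h) :
    P.side (g * h)⁻¹ = P.side h⁻¹ := by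
  rw [mul_inv_rev]
  exact P.side_mul (inv_ne_one.mpr hh) (inv_ne_one.mpr hg) (by rwa [inv_inv, ne_comm])

/-- The half-space of nontrivial elements beginning at a given end. -/
def halfSpace (i : α) : Set G := {g | g ≠ 1 ∧ P.side g = i}

variable {P}

theorem one_notMem_halfSpace (i : α) : (1 : G) ∉ P.halfSpace i := fun h => h.1 rfl

theorem notMem_halfSpace_of_mem {i j : α} (hij : i ≠ j) {g : G} (hg : g ∈ P.halfSpace i) :
    g ∉ P.halfSpace j := fun h => hij (hg.2.symm.trans h.2)

theorem mul_mem_halfSpace {u g : G} (hu : u ≠ 1) (hg : g ∉ P.halfSpace (P.side u⁻¹)) :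
    u * g ∈ P.halfSpace (P.side u) := by
  by_cases hg1 : g = 1
  · rw [hg1, mul_one]
    exact ⟨hu, rfl⟩
  · have hne : P.side u⁻¹ ≠ P.side g := fun h => hg ⟨hg1, h.symm⟩
    exact ⟨P.mul_ne_one hne, P.side_mul hu hg1 hne⟩

variable (P) in
/-- `g` begins at `i`, finishes at `j`, and is not a reduced product of two nontrivial elements. -/
structure IsIrreducible (i j : α) (g : G) : Prop where
  ne_one : g ≠ 1
  side_eq : P.side g = i
  side_inv_eq : P.side g⁻¹ = j
  side_eq_of_mul_eq : ∀ {c d}, c ≠ 1 → d ≠ 1 → c * d = g → P.side c⁻¹ = P.side d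

namespace IsIrreducible

variable {i j k : α} {u v g : G}

theorem inv (hg : P.IsIrreducible i j g) : P.IsIrreducible j i g⁻¹ where
  ne_one := inv_ne_one.mpr hg.ne_one
  side_eq := hg.side_inv_eq
  side_inv_eq := by rw [inv_inv, hg.side_eq]
  side_eq_of_mul_eq {c d} hc hd hcd := by
    have := hg.side_eq_of_mul_eq (inv_ne_one.mpr hd) (inv_ne_one.mpr hc)
      (by rw [← mul_inv_rev, hcd, inv_inv])
    rw [← this, inv_inv]

theorem mul (hu : P.IsIrreducible i j u) (hv : P.IsIrreducible j k v) (huv : u * v ≠ 1) :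
    P.IsIrreducible i k (u * v) where
  ne_one := huv
  side_eq := by
    have := hv.side_eq_of_mul_eq (inv_ne_one.mpr hu.ne_one) huv (inv_mul_cancel_left u v)
    rw [← this, inv_inv, hu.side_eq]
  side_inv_eq := by
    rw [← hv.side_inv_eq]
    exact hu.side_eq_of_mul_eq huv (inv_ne_one.mpr hv.ne_one) (mul_inv_cancel_right u v)
  side_eq_of_mul_eq {c d} hc hd hcd := by
    by_cases hcu : c⁻¹ * u = 1
    · obtain rfl : c = u := inv_mul_eq_one.mp hcu
      obtain rfl : d = v := mul_left_cancel hcd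
      rw [hu.side_inv_eq, hv.side_eq]
    · have hsplit_u : P.side c⁻¹ = P.side (c⁻¹ * u) :=
        hu.side_eq_of_mul_eq hc hcu (mul_inv_cancel_left c u)
      have hsplit_v : P.side (c⁻¹ * u)⁻¹⁻¹ = P.side d :=
        hv.side_eq_of_mul_eq (inv_ne_one.mpr hcu) hd
          (by rw [mul_inv_rev, inv_inv, mul_assoc, hcd, inv_mul_cancel_left])
      rw [hsplit_u, ← hsplit_v, inv_inv]

theorem mul_of_ne (hu : P.IsIrreducible i j u) (hv : P.IsIrreducible j k v) (hik : i ≠ k) :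
    P.IsIrreducible i k (u * v) :=
  hu.mul hv fun huv => hik <| by
    rw [← hu.side_eq, ← hv.side_inv_eq, inv_eq_of_mul_eq_one_left huv]

theorem mul_mem_halfSpace (hu : P.IsIrreducible i j u) (hg : g ∉ P.halfSpace j) :
    u * g ∈ P.halfSpace i := by
  rw [← hu.side_inv_eq] at hg
  rw [← hu.side_eq]
  exact Polarization.mul_mem_halfSpace hu.ne_one hg

end IsIrreducible

theorem eq_top_of_isIrreducible_mem {T : Subgroup G}
    (hT : ∀ i j g, P.IsIrreducible i j g → g ∈ T) : T = ⊤ := by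
  rw [Subgroup.eq_top_iff']
  intro g
  induction hn : P.len g using Nat.strong_induction_on generalizing g with
  | _ n ih =>
    by_cases hg1 : g = 1
    · rw [hg1]
      exact T.one_mem
    by_cases hred : ∃ c d, c ≠ 1 ∧ d ≠ 1 ∧ c * d = g ∧ P.side c⁻¹ ≠ P.side d
    · obtain ⟨c, d, hc, hd, rfl, hcd⟩ := hred
      have hlen := P.len_mul hc hd hcd
      have hc_pos := P.len_pos hc
      have hd_pos := P.len_pos hd
      exact T.mul_mem (ih _ (by omega) c rfl) (ih _ (by omega) d rfl)
    · push Not at hred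
      exact hT _ _ g ⟨hg1, rfl, rfl, fun {c d} hc hd hcd => hred c d hc hd hcd⟩

variable (P) in
/-- The vertex group at `i` of the groupoid of irreducible elements. -/
def vertexGroup (i : α) : Subgroup G where
  carrier := {g | g = 1 ∨ P.IsIrreducible i i g}
  one_mem' := Or.inl rfl
  mul_mem' := by
    rintro a b (rfl | ha) (rfl | hb)
    · exact Or.inl (one_mul 1)
    · exact Or.inr (by rwa [one_mul])
    · exact Or.inr (by rwa [mul_one])
    · exact or_iff_not_imp_left.mpr (ha.mul hb)
  inv_mem' := by
    rintro a (rfl | ha)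
    · exact Or.inl inv_one
    · exact Or.inr ha.inv

theorem isIrreducible_of_mem_vertexGroup {i : α} {g : G} (hg : g ∈ P.vertexGroup i)
    (hg1 : g ≠ 1) : P.IsIrreducible i i g := hg.resolve_left hg1

theorem IsIrreducible.mem_vertexGroup {i : α} {g : G} (hg : P.IsIrreducible i i g) :
    g ∈ P.vertexGroup i := Or.inr hg

theorem lift_vertexGroup_injective :
    Function.Injective (CoprodI.lift fun i => (P.vertexGroup i).subtype) := by
  have hmove (i : α) (a : P.vertexGroup i) (ha : a ≠ 1) {g : G} (hg : g ∉ P.halfSpace i) :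
      (a : G) * g ∈ P.halfSpace i :=
    (isIrreducible_of_mem_vertexGroup a.2 (by simpa using ha)).mul_mem_halfSpace hg
  exact coprodI_lift_injective_of_ping_pong_basepoint _ P.halfSpace 1 one_notMem_halfSpace
    (fun i a ha => hmove i a ha (one_notMem_halfSpace i))
    fun i j hij a ha x hx => hmove i a ha (notMem_halfSpace_of_mem hij.symm hx)

theorem iSup_vertexGroup_eq_top (hP : ∀ i j g, P.IsIrreducible i j g → i = j) :
    ⨆ i, P.vertexGroup i = ⊤ :=
  eq_top_of_isIrreducible_mem fun i j g hg => by
    obtain rfl := hP i j g hg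
    exact Subgroup.mem_iSup_of_mem i hg.mem_vertexGroup

section Loxodromic

variable {i j : α} {t : G}

theorem IsIrreducible.pow_mul_mem_halfSpace (ht : P.IsIrreducible i j t) (hij : i ≠ j) (n : ℕ)
    {g : G} (hg : g ∈ P.halfSpace i) : t ^ n * g ∈ P.halfSpace i := by
  induction n with
  | zero => simpa using hg
  | succ n ih =>
    rw [pow_succ', mul_assoc]
    exact ht.mul_mem_halfSpace (notMem_halfSpace_of_mem hij ih)

theorem IsIrreducible.inv_pow_mul_notMem_halfSpace (ht : P.IsIrreducible i j t) (hij : i ≠ j)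
    (n : ℕ) {g : G} (hg : g ∉ P.halfSpace i) : t⁻¹ ^ n * g ∉ P.halfSpace i := by
  intro h
  have := ht.pow_mul_mem_halfSpace hij n h
  rw [inv_pow, mul_inv_cancel_left] at this
  exact hg this

variable (P) in
/-- The elements between the half-space at `i` and its translate under `t⁻¹`, which form a
fundamental domain for the powers of `t`. -/
def strip (i : α) (t : G) : Set G := {g | g ∉ P.halfSpace i ∧ t * g ∈ P.halfSpace i}

theorem IsIrreducible.zpow_mul_notMem_strip (ht : P.IsIrreducible i j t) (hij : i ≠ j) {n : ℤ}
    (hn : n ≠ 0) {g : G} (hg : g ∈ P.strip i t) : t ^ n * g ∉ P.strip i t := by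
  rintro ⟨hn₁, hn₂⟩
  obtain ⟨m, rfl | rfl⟩ := n.eq_nat_or_neg
  · obtain ⟨m, rfl⟩ := Nat.exists_eq_succ_of_ne_zero (by simpa using hn : m ≠ 0)
    apply hn₁
    rw [zpow_natCast, pow_succ, mul_assoc]
    exact ht.pow_mul_mem_halfSpace hij m hg.2
  · obtain ⟨m, rfl⟩ := Nat.exists_eq_succ_of_ne_zero (by simpa using hn : m ≠ 0)
    refine ht.inv_pow_mul_notMem_halfSpace hij m hg.1 ?_
    rwa [zpow_neg, zpow_natCast, ← inv_pow, pow_succ', mul_assoc, mul_inv_cancel_left] at hn₂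

theorem one_mem_strip (ht : P.IsIrreducible i j t) : 1 ∈ P.strip i t := by
  refine ⟨one_notMem_halfSpace i, ?_⟩
  rw [mul_one]
  exact ⟨ht.ne_one, ht.side_eq⟩

theorem IsIrreducible.mul_mem_strip (ht : P.IsIrreducible i j t) (hij : i ≠ j) {a g : G}
    (ha : P.IsIrreducible j j a) (hg : g ∉ P.strip i t \ {1}) :
    a * g ∈ P.strip i t \ {1} := by
  suffices h : a * g ∈ P.halfSpace j ∧ t * (a * g) ∈ P.halfSpace i from
    ⟨⟨notMem_halfSpace_of_mem hij.symm h.1, h.2⟩, h.1.1⟩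
  by_cases hgj : g ∈ P.halfSpace j
  · have htg : t * g ∉ P.halfSpace i := fun h =>
      hg ⟨⟨notMem_halfSpace_of_mem hij.symm hgj, h⟩, hgj.1⟩
    have hat : P.IsIrreducible j i (a * t⁻¹) := ha.mul_of_ne ht.inv hij.symm
    have htat : P.IsIrreducible i i (t * (a * t⁻¹)) := ht.mul hat fun h => ha.ne_one <| by
      rwa [← mul_assoc, conj_eq_one_iff] at h
    constructor
    · simpa only [mul_assoc, inv_mul_cancel_left] using hat.mul_mem_halfSpace htg
    · simpa only [mul_assoc, inv_mul_cancel_left] using htat.mul_mem_halfSpace htg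
  · rw [← mul_assoc]
    exact ⟨ha.mul_mem_halfSpace hgj, (ht.mul_of_ne ha hij).mul_mem_halfSpace hgj⟩

variable (P) in
/-- The two free factors of an HNN decomposition without edge group: the stable letter `t` and the
vertex group at `j`. -/
def hnnFactor (j : α) (t : G) (b : Bool) : Subgroup G :=
  bif b then Subgroup.zpowers t else P.vertexGroup j

theorem lift_hnnFactor_injective (ht : P.IsIrreducible i j t) (hij : i ≠ j) :
    Function.Injective (CoprodI.lift fun b => (P.hnnFactor j t b).subtype) := by
  let X (b : Bool) : Set G := bif b then (P.strip i t)ᶜ else P.strip i t \ {1}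
  have hpow (m : Subgroup.zpowers t) (hm : m ≠ 1) {g : G} (hg : g ∈ P.strip i t) :
      (m : G) * g ∉ P.strip i t := by
    obtain ⟨_, n, rfl⟩ := m
    exact ht.zpow_mul_notMem_strip hij (fun hn => hm (by simp [hn])) hg
  have hvertex (a : P.vertexGroup j) (ha : a ≠ 1) {g : G} (hg : g ∉ P.strip i t \ {1}) :
      (a : G) * g ∈ P.strip i t \ {1} :=
    ht.mul_mem_strip hij (isIrreducible_of_mem_vertexGroup a.2 (by simpa using ha)) hg
  refine coprodI_lift_injective_of_ping_pong_basepoint _ X 1 ?_ ?_ ?_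
  · rintro (_ | _) h
    · exact h.2 rfl
    · exact h (one_mem_strip ht)
  · rintro (_ | _) m hm
    · exact hvertex m hm fun h => h.2 rfl
    · exact hpow m hm (one_mem_strip ht)
  · rintro (_ | _) (_ | _) hne m hm x hx
    · exact absurd rfl hne
    · exact hvertex m hm fun h => hx h.1
    · exact hpow m hm hx.1
    · exact absurd rfl hne

end Loxodromic

theorem iSup_hnnFactor_eq_top {P : Polarization G Bool} {i j : Bool} {t : G}
    (ht : P.IsIrreducible i j t) (hij : i ≠ j) : ⨆ b, P.hnnFactor j t b = ⊤ := by
  set S := ⨆ b, P.hnnFactor j t b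
  have htS : t ∈ S := Subgroup.mem_iSup_of_mem true (Subgroup.mem_zpowers t)
  have hends : ∀ k, k = j ∨ k = i :=
    (by decide : ∀ i j : Bool, i ≠ j → ∀ k, k = j ∨ k = i) i j hij
  have hfinish {k : Bool} {g : G} (hg : P.IsIrreducible k j g) : g ∈ S := by
    obtain rfl | rfl := hends k
    · exact Subgroup.mem_iSup_of_mem false hg.mem_vertexGroup
    · by_cases h : t⁻¹ * g = 1
      · rwa [← inv_mul_eq_one.mp h]
      · exact (S.mul_mem_cancel_left (S.inv_mem htS)).mp <|
          Subgroup.mem_iSup_of_mem false (ht.inv.mul hg h).mem_vertexGroup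
  refine eq_top_of_isIrreducible_mem (P := P) fun k l g hg => ?_
  obtain rfl | rfl := hends l
  · exact hfinish hg
  · by_cases h : g * t = 1
    · rw [eq_inv_of_mul_eq_one_left h]
      exact S.inv_mem htS
    · exact (S.mul_mem_cancel_right htS).mp (hfinish (hg.mul ht h))

end Polarization

theorem FreelyIndecomposable.isCyclic_of_isIrreducible {G : Type} [Group G]
    (hG : FreelyIndecomposable G) {P : Polarization G Bool} {i j : Bool} {t : G}
    (ht : P.IsIrreducible i j t) (hij : i ≠ j) : IsCyclic G := by
  obtain ⟨_ | _, htop⟩ := hG.exists_eq_top (Polarization.lift_hnnFactor_injective ht hij)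
    (Polarization.iSup_hnnFactor_eq_top ht hij)
  · have htj : t ∈ P.vertexGroup j := (Subgroup.eq_top_iff' _).mp htop t
    exact absurd (ht.side_eq.symm.trans
      (Polarization.isIrreducible_of_mem_vertexGroup htj ht.ne_one).side_eq) hij
  · exact isCyclic_iff_exists_zpowers_eq_top.mpr ⟨t, htop⟩

theorem FreelyIndecomposable.bool_side_inv_eq_of_not_isCyclic {G : Type} [Group G]
    (hG : FreelyIndecomposable G) (hcyc : ¬ IsCyclic G) (P : Polarization G Bool) (g : G) :
    P.side g⁻¹ = P.side g := by
  have hirr : ∀ i j t, P.IsIrreducible i j t → i = j := fun i j t ht => by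
    by_contra hij
    exact hcyc (hG.isCyclic_of_isIrreducible ht hij)
  obtain ⟨i, htop⟩ := hG.exists_eq_top Polarization.lift_vertexGroup_injective
    (Polarization.iSup_vertexGroup_eq_top hirr)
  by_cases hg : g = 1
  · rw [hg, inv_one]
  · have h := Polarization.isIrreducible_of_mem_vertexGroup
      (htop ▸ Subgroup.mem_top g : g ∈ P.vertexGroup i) hg
    rw [h.side_eq, h.side_inv_eq]

theorem FreelyIndecomposable.side_inv_eq_of_not_isCyclic {G : Type} [Group G]
    (hG : FreelyIndecomposable G) (hcyc : ¬ IsCyclic G) {α : Type*} (P : Polarization G α)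
    (g : G) : P.side g⁻¹ = P.side g := by
  classical
  -- Free indecomposability is about two factors only: identify all ends except that of `g`.
  have h := hG.bool_side_inv_eq_of_not_isCyclic hcyc
    (P.map fun a => decide (a = P.side g)) g
  simpa [Polarization.map] using h

section Words

variable {ι : Type*} {M : ι → Type*} [∀ i, Group (M i)]

/-- The index of the factor containing the first letter of `g`, or `none` if `g = 1`. -/
noncomputable def firstIdx (g : CoprodI M) : Option ι := (reducedWord g).fstIdx

/-- The number of letters of the reduced word representing `g`. -/
noncomputable def wordLength (g : CoprodI M) : ℕ := (reducedWord g).toList.length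

theorem firstIdx_neWord_prod {i j : ι} (w : CoprodI.NeWord M i j) :
    firstIdx w.prod = some i := by
  rw [firstIdx, CoprodI.NeWord.prod, reducedWord_prod, CoprodI.Word.fstIdx]
  exact congrArg (Option.map Sigma.fst) w.toList_head?

theorem firstIdx_inv_neWord_prod {i j : ι} (w : CoprodI.NeWord M i j) :
    firstIdx w.prod⁻¹ = some j := by
  rw [← CoprodI.NeWord.inv_prod, firstIdx_neWord_prod]

theorem wordLength_one : wordLength (1 : CoprodI M) = 0 := by
  rw [wordLength, ← CoprodI.Word.prod_empty, reducedWord_prod]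
  rfl

theorem wordLength_neWord_prod {i j : ι} (w : CoprodI.NeWord M i j) :
    wordLength w.prod = w.toList.length := by
  rw [wordLength, CoprodI.NeWord.prod, reducedWord_prod, CoprodI.NeWord.toWord]

variable (M) in
/-- The polarization of a free product by the factors of the first letters. -/
noncomputable def wordPolarization : Polarization (CoprodI M) (Option ι) where
  side := firstIdx
  len := wordLength
  len_pos hg := by
    obtain ⟨i, j, w, rfl⟩ := exists_neWord_prod_eq hg
    rw [wordLength_neWord_prod]
    exact List.length_pos_iff.mpr w.toList_ne_nil
  side_mul hg hh hgh := by
    obtain ⟨i, j, v, rfl⟩ := exists_neWord_prod_eq hg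
    obtain ⟨k, l, w, rfl⟩ := exists_neWord_prod_eq hh
    rw [firstIdx_inv_neWord_prod, firstIdx_neWord_prod] at hgh
    rw [← CoprodI.NeWord.append_prod (hne := ne_of_apply_ne some hgh), firstIdx_neWord_prod,
      firstIdx_neWord_prod]
  len_mul hg hh hgh := by
    obtain ⟨i, j, v, rfl⟩ := exists_neWord_prod_eq hg
    obtain ⟨k, l, w, rfl⟩ := exists_neWord_prod_eq hh
    rw [firstIdx_inv_neWord_prod, firstIdx_neWord_prod] at hgh
    rw [← CoprodI.NeWord.append_prod (hne := ne_of_apply_ne some hgh), wordLength_neWord_prod,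
      wordLength_neWord_prod, wordLength_neWord_prod, CoprodI.NeWord.toList, List.length_append]

theorem firstIdx_mul {g h : CoprodI M} (hg : g ≠ 1) (hh : h ≠ 1)
    (hgh : firstIdx g⁻¹ ≠ firstIdx h) : firstIdx (g * h) = firstIdx g :=
  (wordPolarization M).side_mul hg hh hgh

theorem firstIdx_inv_mul {g h : CoprodI M} (hg : g ≠ 1) (hh : h ≠ 1)
    (hgh : firstIdx g⁻¹ ≠ firstIdx h) : firstIdx (g * h)⁻¹ = firstIdx h⁻¹ :=
  (wordPolarization M).side_inv_mul hg hh hgh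

theorem wordLength_mul {g h : CoprodI M} (hg : g ≠ 1) (hh : h ≠ 1)
    (hgh : firstIdx g⁻¹ ≠ firstIdx h) : wordLength (g * h) = wordLength g + wordLength h :=
  (wordPolarization M).len_mul hg hh hgh

variable {i : ι}

theorem coprodI_of_ne_one {m : M i} (hm : m ≠ 1) : CoprodI.of m ≠ 1 :=
  (map_ne_one_iff _ (CoprodI.of_injective i)).mpr hm

theorem firstIdx_of {m : M i} (hm : m ≠ 1) : firstIdx (CoprodI.of m) = some i := by
  rw [← CoprodI.NeWord.prod_singleton m hm, firstIdx_neWord_prod]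

theorem firstIdx_inv_of {m : M i} (hm : m ≠ 1) : firstIdx (CoprodI.of m)⁻¹ = some i := by
  rw [← map_inv, firstIdx_of (inv_ne_one.mpr hm)]

theorem wordLength_of {m : M i} (hm : m ≠ 1) : wordLength (CoprodI.of m) = 1 := by
  rw [← CoprodI.NeWord.prod_singleton m hm, wordLength_neWord_prod]
  rfl

theorem exists_of_mul_eq (i : ι) (g : CoprodI M) :
    ∃ (m : M i) (g' : CoprodI M), firstIdx g' ≠ some i ∧ CoprodI.of m * g' = g := by
  classical
  let p := CoprodI.Word.equivPair i (reducedWord g)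
  refine ⟨p.head, p.tail.prod, ?_, ?_⟩
  · rw [firstIdx, reducedWord_prod]
    exact p.fstIdx_ne
  · rw [← CoprodI.Word.prod_rcons, ← CoprodI.Word.equivPair_symm, Equiv.symm_apply_apply,
      prod_reducedWord]

theorem exists_mul_of_eq (i : ι) (g : CoprodI M) :
    ∃ (m : M i) (g' : CoprodI M), firstIdx g'⁻¹ ≠ some i ∧ g' * CoprodI.of m = g := by
  obtain ⟨m, g', hg', hmg⟩ := exists_of_mul_eq i g⁻¹
  refine ⟨m⁻¹, g'⁻¹, by rwa [inv_inv], ?_⟩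
  rw [map_inv, ← mul_inv_rev, hmg, inv_inv]

theorem firstIdx_mul_of_of_firstIdx_inv_ne {g : CoprodI M} (hg : g ≠ 1)
    (hgi : firstIdx g⁻¹ ≠ some i) (m : M i) : firstIdx (g * CoprodI.of m) = firstIdx g := by
  by_cases hm : m = 1
  · rw [hm, map_one, mul_one]
  · exact firstIdx_mul hg (coprodI_of_ne_one hm) (by rwa [firstIdx_of hm])

theorem firstIdx_mul_of {g : CoprodI M} (hg : g ≠ 1) (hgi : firstIdx g ≠ some i) (m : M i) :
    firstIdx (g * CoprodI.of m) = firstIdx g := by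
  obtain ⟨l, g', hg', rfl⟩ := exists_mul_of_eq i g
  have hg'1 : g' ≠ 1 := by
    rintro rfl
    rw [one_mul] at hg hgi
    exact hgi (firstIdx_of fun hl => hg (by rw [hl, map_one]))
  rw [mul_assoc, ← map_mul, firstIdx_mul_of_of_firstIdx_inv_ne hg'1 hg',
    firstIdx_mul_of_of_firstIdx_inv_ne hg'1 hg']

theorem wordLength_mul_of {g : CoprodI M} (hgi : firstIdx g⁻¹ ≠ some i) {m : M i} (hm : m ≠ 1) :
    wordLength (g * CoprodI.of m) = wordLength g + 1 := by
  by_cases hg : g = 1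
  · rw [hg, one_mul, wordLength_one, wordLength_of hm]
  · rw [wordLength_mul hg (coprodI_of_ne_one hm) (by rwa [firstIdx_of hm]), wordLength_of hm]

theorem wordLength_mul_of_le {g : CoprodI M} (hgi : firstIdx g⁻¹ = some i) (m : M i) :
    wordLength (g * CoprodI.of m) ≤ wordLength g := by
  obtain ⟨l, g', hg', rfl⟩ := exists_mul_of_eq i g
  have hl : l ≠ 1 := by
    rintro rfl
    rw [map_one, mul_one] at hgi
    exact hg' hgi
  rw [mul_assoc, ← map_mul, wordLength_mul_of hg' hl]
  by_cases hlm : l * m = 1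
  · rw [hlm, map_one, mul_one]
    exact Nat.le_succ _
  · exact (wordLength_mul_of hg' hlm).le

theorem eq_of_of_eq_of {j : ι} {a : M i} {b : M j} (ha : a ≠ 1)
    (hab : CoprodI.of a = CoprodI.of b) : i = j := by
  have hb : b ≠ 1 := by
    rintro rfl
    exact coprodI_of_ne_one ha (hab.trans (map_one _))
  rw [← Option.some_inj, ← firstIdx_of ha, hab, firstIdx_of hb]

theorem eq_and_mem_range_of_of_conj_eq {j : ι} {z : M i} (hz : z ≠ 1) {w : M j} {q : CoprodI M}
    (h : q * CoprodI.of z * q⁻¹ = CoprodI.of w) :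
    i = j ∧ q ∈ (CoprodI.of : M i →* CoprodI M).range := by
  obtain ⟨m, q', hq', rfl⟩ := exists_mul_of_eq i q
  have hz' : m * z * m⁻¹ ≠ 1 := conj_eq_one_iff.not.mpr hz
  have hconj : q' * CoprodI.of (m * z * m⁻¹) * q'⁻¹ = CoprodI.of w := by
    rw [← h, map_mul, map_mul, map_inv]
    group
  by_cases hq'1 : q' = 1
  · subst hq'1
    rw [one_mul, inv_one, mul_one] at hconj
    exact ⟨eq_of_of_eq_of hz' hconj, m, (one_mul _).symm⟩
  · have hw : w ≠ 1 := by
      rintro rfl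
      rw [map_one, conj_eq_one_iff] at hconj
      exact coprodI_of_ne_one hz' hconj
    have hred : firstIdx (CoprodI.of (m * z * m⁻¹))⁻¹ ≠ firstIdx q'⁻¹ := by
      rw [firstIdx_inv_of hz']
      exact hq'.symm
    have hlen : wordLength (CoprodI.of w) =
        wordLength q' + (1 + wordLength q'⁻¹) := by
      rw [← hconj, mul_assoc, wordLength_mul hq'1, wordLength_mul (coprodI_of_ne_one hz')
        (inv_ne_one.mpr hq'1) hred, wordLength_of hz']
      · exact (wordPolarization M).mul_ne_one hred
      · rwa [firstIdx_mul (coprodI_of_ne_one hz') (inv_ne_one.mpr hq'1) hred, firstIdx_of hz']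
    have hpos : 0 < wordLength q' := (wordPolarization M).len_pos hq'1
    rw [wordLength_of hw] at hlen
    omega

/-- The conjugate `p⁻¹ Mᵢ p` of the factor `Mᵢ` in the free product. -/
def factorConj (i : ι) (p : CoprodI M) : Subgroup (CoprodI M) :=
  (CoprodI.of : M i →* CoprodI M).range.comap (MulAut.conj p).toMonoidHom

theorem mem_factorConj {p g : CoprodI M} :
    g ∈ factorConj i p ↔ p * g * p⁻¹ ∈ (CoprodI.of : M i →* CoprodI M).range := Iff.rfl

theorem exists_of_eq_conj_of_mem_factorConj {p c : CoprodI M} (hc : c ≠ 1)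
    (hcp : c ∈ factorConj i p) : ∃ z : M i, z ≠ 1 ∧ CoprodI.of z = p * c * p⁻¹ := by
  obtain ⟨z, hz⟩ := mem_factorConj.mp hcp
  refine ⟨z, ?_, hz⟩
  rintro rfl
  exact hc (conj_eq_one_iff.mp (hz.symm.trans (map_one _)))

theorem factorConj_of_mul (m : M i) (p : CoprodI M) :
    factorConj i (CoprodI.of m * p) = factorConj i p := by
  ext g
  have hconj : CoprodI.of m * p * g * (CoprodI.of m * p)⁻¹ =
      CoprodI.of m * (p * g * p⁻¹) * (CoprodI.of m)⁻¹ := by group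
  have hm : CoprodI.of m ∈ (CoprodI.of : M i →* CoprodI M).range := ⟨m, rfl⟩
  rw [mem_factorConj, mem_factorConj, hconj, Subgroup.mul_mem_cancel_right _ (inv_mem hm),
    Subgroup.mul_mem_cancel_left _ hm]

theorem factorConj_eq_of_mem {j : ι} {p q c : CoprodI M} (hc : c ≠ 1)
    (hp : c ∈ factorConj i p) (hq : c ∈ factorConj j q) : factorConj i p = factorConj j q := by
  obtain ⟨z, hz1, hz⟩ := exists_of_eq_conj_of_mem_factorConj hc hp
  obtain ⟨w, hw⟩ := mem_factorConj.mp hq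
  have hconj : q * p⁻¹ * CoprodI.of z * (q * p⁻¹)⁻¹ = CoprodI.of w := by
    rw [hz, hw]
    group
  obtain ⟨rfl, m, hm⟩ := eq_and_mem_range_of_of_conj_eq hz1 hconj
  rw [← eq_mul_inv_iff_mul_eq.mp hm, factorConj_of_mul]

theorem mem_factorConj_of_conj_mem {p c g : CoprodI M} (hc : c ≠ 1) (hcp : c ∈ factorConj i p)
    (hgc : g * c * g⁻¹ ∈ factorConj i p) : g ∈ factorConj i p := by
  obtain ⟨z, hz1, hz⟩ := exists_of_eq_conj_of_mem_factorConj hc hcp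
  obtain ⟨w, hw⟩ := mem_factorConj.mp hgc
  refine mem_factorConj.mpr (eq_and_mem_range_of_of_conj_eq (w := w) hz1 ?_).2
  rw [hz, hw]
  group

theorem factorConj_ne_top [Nontrivial ι] [∀ j, Nontrivial (M j)] (i : ι) (p : CoprodI M) :
    factorConj i p ≠ ⊤ := by
  intro htop
  obtain ⟨j, hj⟩ := exists_ne i
  obtain ⟨x, hx⟩ := exists_ne (1 : M j)
  have hmem : p⁻¹ * CoprodI.of x * p ∈ factorConj i p := htop ▸ Subgroup.mem_top _
  obtain ⟨w, hw⟩ := mem_factorConj.mp hmem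
  exact hj (eq_of_of_eq_of (b := w) hx (by rw [hw]; group))

theorem center_coprodI_eq_bot [Nontrivial ι] [∀ j, Nontrivial (M j)] :
    Subgroup.center (CoprodI M) = ⊥ := by
  refine (Subgroup.eq_bot_iff_forall _).mpr fun z hz => ?_
  have hrange (j : ι) : z ∈ (CoprodI.of : M j →* CoprodI M).range := by
    obtain ⟨x, hx⟩ := exists_ne (1 : M j)
    refine (eq_and_mem_range_of_of_conj_eq (w := x) hx ?_).2
    rw [← Subgroup.mem_center_iff.mp hz, mul_inv_cancel_right]
  by_contra hz1
  obtain ⟨i, j, hij⟩ := exists_pair_ne ι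
  obtain ⟨a, ha⟩ := hrange i
  obtain ⟨b, hb⟩ := hrange j
  refine hij (eq_of_of_eq_of (a := a) (b := b) ?_ (ha.trans hb.symm))
  rintro rfl
  exact hz1 (ha.symm.trans (map_one _))

theorem exists_mem_range_of_of_wordLength_le {g : CoprodI M} (hg1 : g ≠ 1)
    (hg : firstIdx g⁻¹ = firstIdx g) (hmin : ∀ q, wordLength g ≤ wordLength (q * g * q⁻¹)) :
    ∃ i, g ∈ (CoprodI.of : M i →* CoprodI M).range := by
  obtain ⟨i, j, w, hw⟩ := exists_neWord_prod_eq hg1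
  have hgi : firstIdx g = some i := by rw [← hw, firstIdx_neWord_prod]
  obtain ⟨m, g', hg', rfl⟩ := exists_of_mul_eq i g
  refine ⟨i, ?_⟩
  by_cases hg'1 : g' = 1
  · exact ⟨m, by rw [hg'1, mul_one]⟩
  have hm : m ≠ 1 := by
    rintro rfl
    rw [map_one, one_mul] at hgi
    exact hg' hgi
  have hred : firstIdx (CoprodI.of m)⁻¹ ≠ firstIdx g' := by
    rw [firstIdx_inv_of hm]
    exact hg'.symm
  have hlast : firstIdx g'⁻¹ = some i := by
    rw [← firstIdx_inv_mul (coprodI_of_ne_one hm) hg'1 hred, hg, hgi]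
  have hcyclic := hmin (CoprodI.of m)⁻¹
  rw [inv_inv, inv_mul_cancel_left, wordLength_mul (coprodI_of_ne_one hm) hg'1 hred,
    wordLength_of hm] at hcyclic
  have := wordLength_mul_of_le hlast m
  omega

theorem firstIdx_eq_some_of_firstIdx_inv_mul_eq {m : M i} (hm : m ≠ 1) {g : CoprodI M}
    (hg1 : g ≠ 1) (hg : firstIdx g⁻¹ = firstIdx g)
    (hmg : firstIdx (CoprodI.of m * g)⁻¹ = firstIdx (CoprodI.of m * g)) :
    firstIdx g = some i := by
  by_contra hgi
  have hred : firstIdx (CoprodI.of m)⁻¹ ≠ firstIdx g := by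
    rw [firstIdx_inv_of hm]
    exact Ne.symm hgi
  rw [firstIdx_inv_mul (coprodI_of_ne_one hm) hg1 hred,
    firstIdx_mul (coprodI_of_ne_one hm) hg1 hred, firstIdx_of hm, hg] at hmg
  exact hgi hmg

theorem le_range_of_of_forall_firstIdx_eq {K : Subgroup (CoprodI M)}
    (hK : ∀ g ∈ K, ∀ p, firstIdx (p * g * p⁻¹)⁻¹ = firstIdx (p * g * p⁻¹))
    {m : M i} (hm : m ≠ 1) (hmK : CoprodI.of m ∈ K) :
    K ≤ (CoprodI.of : M i →* CoprodI M).range := by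
  intro g hg
  obtain ⟨l, g', hg', rfl⟩ := exists_of_mul_eq i g
  by_cases hg1 : CoprodI.of l * g' = 1
  · exact hg1 ▸ one_mem _
  by_cases hg'1 : g' = 1
  · exact ⟨l, by rw [hg'1, mul_one]⟩
  have hgl : CoprodI.of l⁻¹ * (CoprodI.of l * g') * (CoprodI.of l⁻¹)⁻¹ = g' * CoprodI.of l := by
    rw [map_inv]; group
  have hmgl : CoprodI.of l⁻¹ * (CoprodI.of m * (CoprodI.of l * g')) * (CoprodI.of l⁻¹)⁻¹ =
      CoprodI.of (l⁻¹ * m * l) * (g' * CoprodI.of l) := by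
    rw [map_mul, map_mul, map_inv]; group
  have hl : l⁻¹ * m * l ≠ 1 := by
    simpa only [inv_inv] using conj_eq_one_iff (a := l⁻¹) (b := m) |>.not.mpr hm
  have hfirst : firstIdx (g' * CoprodI.of l) = firstIdx g' := firstIdx_mul_of hg'1 hg' l
  refine absurd (hfirst.symm.trans (firstIdx_eq_some_of_firstIdx_inv_mul_eq hl ?_ ?_ ?_)) hg'
  · rw [← hgl]
    exact conj_eq_one_iff.not.mpr hg1
  · rw [← hgl]
    exact hK _ hg _
  · rw [← hmgl]
    exact hK _ (K.mul_mem hmK hg) _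

theorem exists_le_factorConj_of_forall_firstIdx_eq [Nonempty ι] {K : Subgroup (CoprodI M)}
    (hK : ∀ g ∈ K, ∀ p, firstIdx (p * g * p⁻¹)⁻¹ = firstIdx (p * g * p⁻¹)) :
    ∃ i p, K ≤ factorConj i p := by
  obtain rfl | ⟨a, haK, ha⟩ := K.bot_or_exists_ne_one
  · exact ⟨Classical.arbitrary ι, 1, bot_le⟩
  let p := Function.argmin fun q : CoprodI M => wordLength (q * a * q⁻¹)
  have hconj (q g : CoprodI M) : q * (p * g * p⁻¹) * q⁻¹ = q * p * g * (q * p)⁻¹ := by group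
  obtain ⟨i, m, hm⟩ := exists_mem_range_of_of_wordLength_le (conj_eq_one_iff.not.mpr ha)
    (hK a haK p) fun q => by
      rw [hconj]
      exact Function.argmin_le (fun q : CoprodI M => wordLength (q * a * q⁻¹)) (q * p)
  refine ⟨i, p, Subgroup.map_le_iff_le_comap.mp
    (le_range_of_of_forall_firstIdx_eq ?_ (m := m) ?_ ?_)⟩
  · rintro _ ⟨g, hg, rfl⟩ q
    rw [MulEquiv.coe_toMonoidHom, MulAut.conj_apply, hconj]
    exact hK g hg _
  · rintro rfl
    exact conj_eq_one_iff.not.mpr ha (hm.symm.trans (map_one _))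
  · exact ⟨a, haK, hm.symm⟩

end Words

theorem FreelyIndecomposable.isCyclic_or_range_le_factorConj {H : Type} [Group H]
    (hH : FreelyIndecomposable H) {ι : Type*} [Nonempty ι] {M : ι → Type*} [∀ i, Group (M i)]
    {f : H →* CoprodI M} (hf : Function.Injective f) :
    IsCyclic H ∨ ∃ i p, f.range ≤ factorConj i p := by
  refine or_iff_not_imp_left.mpr fun hcyc => exists_le_factorConj_of_forall_firstIdx_eq ?_
  rintro _ ⟨x, rfl⟩ p
  let P := (wordPolarization M).comap ((MulAut.conj p).toMonoidHom.comp f)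
    ((MulAut.conj p).injective.comp hf)
  have hP := hH.side_inv_eq_of_not_isCyclic hcyc P x
  change firstIdx (p * f x⁻¹ * p⁻¹) = firstIdx (p * f x * p⁻¹) at hP
  rwa [map_inv, ← conj_inv] at hP

section FreelyIndecomposableFamily

variable {ι κ : Type*} {H : ι → Type} [∀ i, Group (H i)] {M : κ → Type*} [∀ j, Group (M j)]
  [Nontrivial κ] [∀ j, Nontrivial (M j)]

theorem eq_one_of_forall_mem_range (hH : ∀ i, FreelyIndecomposable (H i))
    {f : ∀ i, H i →* CoprodI M} (hf : ∀ i, Function.Injective (f i))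
    (hgen : ⨆ i, (f i).range = ⊤) {c : CoprodI M} (hc : ∀ i, c ∈ (f i).range) : c = 1 := by
  have hcomm {i : ι} (hcyc : IsCyclic (H i)) {g : CoprodI M} (hg : g ∈ (f i).range) :
      g * c * g⁻¹ = c := by
    obtain ⟨x, rfl⟩ := hg
    obtain ⟨y, rfl⟩ := hc i
    rw [← map_mul, hcyc.isMulCommutative.is_comm.comm x y, map_mul, mul_inv_cancel_right]
  by_contra hc1
  by_cases hfactor : ∃ i j p, (f i).range ≤ factorConj j p
  · obtain ⟨i, j, p, hij⟩ := hfactor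
    refine factorConj_ne_top j p (eq_top_iff.mpr (hgen ▸ iSup_le fun k => ?_))
    rcases (hH k).isCyclic_or_range_le_factorConj (hf k) with hcyc | ⟨l, q, hq⟩
    · intro g hg
      refine mem_factorConj_of_conj_mem hc1 (hij (hc i)) ?_
      rw [hcomm hcyc hg]
      exact hij (hc i)
    · rwa [factorConj_eq_of_mem hc1 (hij (hc i)) (hq (hc k))]
  · push Not at hfactor
    have hcyc (i : ι) : IsCyclic (H i) :=
      ((hH i).isCyclic_or_range_le_factorConj (hf i)).resolve_right fun ⟨j, p, h⟩ => hfactor i j p h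
    have hcentral : ⨆ i, (f i).range ≤ Subgroup.centralizer {c} := iSup_le fun i g hg =>
      Subgroup.mem_centralizer_singleton_iff.mpr (mul_inv_eq_iff_eq_mul.mp (hcomm (hcyc i) hg))
    have hcenter : c ∈ Subgroup.center (CoprodI M) := Subgroup.mem_center_iff.mpr fun g =>
      Subgroup.mem_centralizer_singleton_iff.mp (hcentral (hgen ▸ Subgroup.mem_top g))
    rw [center_coprodI_eq_bot] at hcenter
    exact hc1 hcenter

theorem subsingleton_of_pushoutI_mulEquiv_coprodI [Nonempty ι] {K : Type*} [Group K]
    {φ : ∀ i, K →* H i} (hφ : ∀ i, Function.Injective (φ i))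
    (hH : ∀ i, FreelyIndecomposable (H i)) (e : PushoutI φ ≃* CoprodI M) : Subsingleton K := by
  let f (i : ι) : H i →* CoprodI M := e.toMonoidHom.comp (PushoutI.of i)
  have hf (i : ι) : Function.Injective (f i) := e.injective.comp (PushoutI.of_injective hφ i)
  have hfφ (i : ι) (k : K) : f i (φ i k) = e (PushoutI.base φ k) :=
    congrArg e (PushoutI.of_apply_eq_base φ i k)
  have hgen : ⨆ i, (f i).range = ⊤ := by
    rw [Subgroup.eq_top_iff']
    intro x
    rw [← e.apply_symm_apply x]
    induction e.symm x using PushoutI.induction_on with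
    | of i g => exact Subgroup.mem_iSup_of_mem i ⟨g, rfl⟩
    | base k => exact Subgroup.mem_iSup_of_mem (Classical.arbitrary ι) ⟨φ _ k, hfφ _ k⟩
    | mul x y hx hy =>
      rw [map_mul]
      exact mul_mem hx hy
  refine subsingleton_of_forall_eq 1 fun k => ?_
  have hk : e (PushoutI.base φ k) = 1 :=
    eq_one_of_forall_mem_range hH hf hgen fun i => ⟨φ i k, hfφ i k⟩
  obtain ⟨i⟩ := ‹Nonempty ι›
  rw [← hfφ i] at hk
  exact (map_eq_one_iff _ (hφ i)).mp ((map_eq_one_iff _ (hf i)).mp hk)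

end FreelyIndecomposableFamily

theorem stmt6_general {ι : Type*} [Nonempty ι] {H : ι → Type} [∀ i, Group (H i)] {K : Type*}
    [Group K] {φ : ∀ i, K →* H i} (hφ : ∀ i, Function.Injective (φ i))
    (hH : ∀ i, FreelyIndecomposable (H i)) {G₁ G₂ : Type u} [Group G₁] [Group G₂]
    [Nontrivial G₁] [Nontrivial G₂] (e : PushoutI φ ≃* Coprod G₁ G₂) : Subsingleton K := by
  obtain ⟨M, _, _, ⟨e'⟩⟩ := exists_coprodI_bool_mulEquiv G₁ G₂
  exact subsingleton_of_pushoutI_mulEquiv_coprodI hφ hH (e.trans e'.symm)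

/-- Lemma 3.3: if `H` is freely indecomposable, `h ∈ H`, and the amalgam `H ∗_{⟨h⟩} H`
(the pushout of the two copies of the inclusion `⟨h⟩ ↪ H`) is isomorphic to a free product
of two nontrivial groups, then `h = 1`. -/
theorem stmt6 (H : Type) [Group H] (hH : FreelyIndecomposable H) (h : H)
    (G₁ G₂ : Type) [Group G₁] [Group G₂] [Nontrivial G₁] [Nontrivial G₂]
    (iso : Monoid.PushoutI (fun _ : Fin 2 => (Subgroup.zpowers h).subtype) ≃*
      Monoid.Coprod G₁ G₂) :
    h = 1 := by
  have := stmt6_general (fun _ => Subgroup.subtype_injective _) (fun _ => hH) iso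
  exact Subgroup.zpowers_eq_bot.mp (Subgroup.eq_bot_of_subsingleton _)
end

section
/- Let Λ be a group containing a residually solvable subgroup Λ' of finite index p. Let N be a perfect group (its commutator subgroup is all of N) such that every subgroup of N of index at most p equals N. Then every group homomorphism φ : N → Λ is trivial. (The key mechanism in part (2) of Proposition 2.1 of the paper.) -/
/-- A group is residually solvable if every nontrivial element survives in some
solvable quotient. -/
def ResiduallySolvable (G : Type*) [Group G] : Prop :=
  ∀ g : G, g ≠ 1 → ∃ (S : Type) (_ : Group S), IsSolvable S ∧ ∃ φ : G →* S, φ g ≠ 1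

section FiniteIndex

variable {G H : Type*} [Group G] [Group H] (K : Subgroup H) [K.FiniteIndex] (f : G →* H)

theorem finiteIndex_comap : (K.comap f).FiniteIndex where
  index_ne_zero := by
    have := K.isFiniteRelIndex_of_finiteIndex (K := f.range)
    rw [Subgroup.index_comap]
    exact Subgroup.relIndex_ne_zero

theorem index_comap_le_index : (K.comap f).index ≤ K.index := by
  rw [Subgroup.index_comap, ← K.relIndex_top_right]
  exact Subgroup.relIndex_le_of_le_right le_top
    (K.relIndex_top_right.trans_ne Subgroup.FiniteIndex.index_ne_zero)

end FiniteIndex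

section Perfect

variable {G H : Type*} [Group G] [Group H] [Group.IsPerfect G]

theorem monoidHom_eq_one_of_isPerfect_of_isSolvable [Group.IsSolvable H] (f : G →* H) :
    f = 1 := by
  have : Group.IsPerfect f.range := .range f
  have range_subsingleton : Subsingleton f.range :=
    not_nontrivial_iff_subsingleton.mp fun _ =>
      Group.IsPerfect.not_isSolvable f.range inferInstance
  exact MonoidHom.range_eq_bot_iff.mp (Subgroup.eq_bot_of_subsingleton f.range)

theorem ResiduallySolvable.monoidHom_eq_one (hH : ResiduallySolvable H) (f : G →* H) :
    f = 1 := by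
  ext g
  by_contra hg
  obtain ⟨S, _, hS, ψ, hψ⟩ := hH (f g) hg
  have : Group.IsSolvable S := hS
  have comp_eq_one : ψ.comp f = 1 := monoidHom_eq_one_of_isPerfect_of_isSolvable _
  exact hψ (DFunLike.congr_fun comp_eq_one g)

end Perfect

/-- The key mechanism of Proposition 2.1 (2): if `Λ` has a residually solvable subgroup of
finite index `p`, `N` is perfect, and every subgroup of `N` of index at most `p` is all of
`N`, then every homomorphism `N → Λ` is trivial. -/
theorem stmt7 (Λ : Type) [Group Λ] (Λ' : Subgroup Λ)
    (hres : ResiduallySolvable Λ') (p : ℕ) (hp : p ≠ 0) (hidx : Λ'.index = p)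
    (N : Type) [Group N] (hperf : commutator N = ⊤)
    (hsub : ∀ K : Subgroup N, K.index ≠ 0 → K.index ≤ p → K = ⊤)
    (φ : N →* Λ) :
    ∀ n : N, φ n = 1 := by
  have : Group.IsPerfect N := ⟨hperf⟩
  have : Λ'.FiniteIndex := ⟨hidx.trans_ne hp⟩
  have comap_eq_top : Λ'.comap φ = ⊤ :=
    hsub _ (finiteIndex_comap Λ' φ).index_ne_zero ((index_comap_le_index Λ' φ).trans_eq hidx)
  have map_mem (n : N) : φ n ∈ Λ' :=
    Subgroup.mem_comap.mp (comap_eq_top ▸ Subgroup.mem_top n)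
  have codRestrict_eq_one : φ.codRestrict Λ' map_mem = 1 := hres.monoidHom_eq_one _
  exact fun n => congrArg Subtype.val (DFunLike.congr_fun codRestrict_eq_one n)
end
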